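/- Fix an integer d ≥ 3 and a real p with 1/(d-1) < p < 1. For every ε > 0 and b > 0 there exist R and c > 0 such that: if 𝒢 is a regular (b,d)-expander on n vertices with girth greater than 2R, and G ∼ 𝒢_p, then the probability that the symmetric difference E₁(G) △ E(C₁(G)) has more than εn elements is at most exp(−c n), and the probability that the symmetric difference V₁(G) △ V(C₁(G)) has more than εn elements is at most exp(−c n), where C₁(G) is a largest connected component of G. -/

import Mathlib

open scoped Classical symmDiff

noncomputable section

namespace Percolation

variable {V : Type} [Fintype V] [DecidableEq V]

/-- The edge set of `G` as a finset. -/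
noncomputable def edgeFinset' (G : SimpleGraph V) : Finset (Sym2 V) :=
  Finset.univ.filter (· ∈ G.edgeSet)

/-- Probability that bond percolation on `G` with parameter `p` produces a spanning
subgraph satisfying `P`. -/
noncomputable def percProb (G : SimpleGraph V) (p : ℝ) (P : SimpleGraph V → Prop) : ℝ :=
  ∑ s ∈ (edgeFinset' G).powerset,
    (p ^ s.card * (1 - p) ^ ((edgeFinset' G).card - s.card)) *
      (if P (SimpleGraph.fromEdgeSet (↑s)) then 1 else 0)

/-- Joint probability for two independent bond percolations on `G`. -/
noncomputable def percProb2 (G : SimpleGraph V) (p₁ p₂ : ℝ)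
    (P : SimpleGraph V → SimpleGraph V → Prop) : ℝ :=
  ∑ s ∈ (edgeFinset' G).powerset, ∑ t ∈ (edgeFinset' G).powerset,
    (p₁ ^ s.card * (1 - p₁) ^ ((edgeFinset' G).card - s.card)) *
    (p₂ ^ t.card * (1 - p₂) ^ ((edgeFinset' G).card - t.card)) *
      (if P (SimpleGraph.fromEdgeSet (↑s)) (SimpleGraph.fromEdgeSet (↑t)) then 1 else 0)

/-- Number of edges of `G` joining `S` to its complement. -/
noncomputable def cutCard (G : SimpleGraph V) (S : Finset V) : ℕ :=
  ((edgeFinset' G).filter (fun e => ∃ x ∈ S, ∃ y, y ∉ S ∧ e = s(x, y))).card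

/-- `G` is a `(b,d)`-expander: max degree at most `d`, and every vertex set of size at most
`n/2` has at least `b|S|` edges to its complement. -/
def IsExpander (G : SimpleGraph V) (b : ℝ) (d : ℕ) : Prop :=
  (∀ v, (G.neighborSet v).ncard ≤ d) ∧
  ∀ S : Finset V, (S.card : ℝ) ≤ Fintype.card V / 2 → b * S.card ≤ cutCard G S

/-- `G` is a regular `(b,d)`-expander. -/
def IsRegularExpander (G : SimpleGraph V) (b : ℝ) (d : ℕ) : Prop :=
  IsExpander G b d ∧ ∀ v, (G.neighborSet v).ncard = d

/-- The vertices of the connected component `c` of `G`. -/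
noncomputable def compVerts (G : SimpleGraph V) (c : G.ConnectedComponent) : Finset V :=
  Finset.univ.filter (fun v => G.connectedComponentMk v = c)

/-- The edges of the connected component `c` of `G`. -/
noncomputable def compEdges (G : SimpleGraph V) (c : G.ConnectedComponent) : Finset (Sym2 V) :=
  (edgeFinset' G).filter (fun e => ∀ v ∈ e, G.connectedComponentMk v = c)

/-- `c` is a largest connected component of `G`. -/
def IsLargestComp (G : SimpleGraph V) (c : G.ConnectedComponent) : Prop :=
  ∀ c' : G.ConnectedComponent, (compVerts G c').card ≤ (compVerts G c).card

/-- The 2-core of the connected component `c` of `G` : the maximal subgraph of `G`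
supported inside `c` all of whose vertices have degree at least 2. -/
noncomputable def twoCoreComp (G : SimpleGraph V) (c : G.ConnectedComponent) : SimpleGraph V :=
  sSup {H : SimpleGraph V | H ≤ G ∧ (∀ v ∈ H.support, G.connectedComponentMk v = c) ∧
    ∀ v ∈ H.support, 2 ≤ (H.neighborSet v).ncard}

/-- The event `A^R_{x,y}(H)`: the connected component of `y` in `H` with the edge `xy`
removed (if present) has at least `R` vertices. -/
def eventA (H : SimpleGraph V) (R : ℕ) (x y : V) : Prop :=
  R ≤ (compVerts (H.deleteEdges {s(x, y)})
        ((H.deleteEdges {s(x, y)}).connectedComponentMk y)).card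

/-- `E₁(H)`: edges `xy` of `H` such that `A^R_{x,y}` or `A^R_{y,x}` holds. -/
noncomputable def E1set (H : SimpleGraph V) (R : ℕ) : Finset (Sym2 V) :=
  (edgeFinset' H).filter (fun e => ∃ x y, e = s(x, y) ∧ (eventA H R x y ∨ eventA H R y x))

/-- `V₁(H)`: vertices `x` such that for some `y`, `xy ∈ E(H)` and `A^R_{x,y}` holds. -/
noncomputable def V1set (H : SimpleGraph V) (R : ℕ) : Finset V :=
  Finset.univ.filter (fun x => ∃ y, H.Adj x y ∧ eventA H R x y)

/-- `E₂(H)`: edges `xy` of `H` such that both `A^R_{x,y}` and `A^R_{y,x}` hold. -/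
noncomputable def E2set (H : SimpleGraph V) (R : ℕ) : Finset (Sym2 V) :=
  (edgeFinset' H).filter (fun e => ∃ x y, e = s(x, y) ∧ eventA H R x y ∧ eventA H R y x)

/-- `V₂(H)`: vertices incident to an edge of `E₂(H)`. -/
noncomputable def V2set (H : SimpleGraph V) (R : ℕ) : Finset V :=
  Finset.univ.filter (fun x => ∃ e ∈ E2set H R, x ∈ e)

/-- `V̄₁(H)`: vertices `y` such that `A^R_{x,y}(H)` holds for some `x`. -/
noncomputable def Vbar1 (H : SimpleGraph V) (R : ℕ) : Finset V :=
  Finset.univ.filter (fun y => ∃ x, eventA H R x y)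

/-- `S` is `k`-thick in `H`: a union of pairwise disjoint subsets, each of size at least
`k`, each inducing a connected subgraph of `H`. -/
def IsThick (H : SimpleGraph V) (k : ℕ) (S : Finset V) : Prop :=
  ∃ P : Finset (Finset V),
    (∀ T ∈ P, k ≤ T.card ∧ (H.induce (↑T : Set V)).Connected) ∧
    (↑P : Set (Finset V)).PairwiseDisjoint id ∧ S = P.biUnion id

/-- `S` is a separator of `K`. -/
def IsSeparator {W : Type} [Fintype W] (K : SimpleGraph W) (S : Finset W) : Prop :=
  ∃ A B : Finset W, Disjoint A B ∧ Disjoint A S ∧ Disjoint B S ∧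
    (∀ w, w ∈ A ∨ w ∈ B ∨ w ∈ S) ∧
    (∀ a ∈ A, ∀ b ∈ B, ¬ K.Adj a b) ∧
    3 * A.card ≤ 2 * Fintype.card W ∧ 3 * B.card ≤ 2 * Fintype.card W

/-- Expectation of `f` over the random subset of `E` keeping each element independently with
probability `p`. -/
def percExp {α : Type} (p : ℝ) (E : Finset α) (f : Finset α → ℝ) : ℝ :=
  ∑ s ∈ E.powerset, (p ^ s.card * (1 - p) ^ (E.card - s.card)) * f s

section Expectation

variable {α : Type} {p : ℝ}

lemma percExp_empty (f : Finset α → ℝ) : percExp p ∅ f = f ∅ := by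
  simp [percExp]

lemma percExp_add (E : Finset α) (f g : Finset α → ℝ) :
    percExp p E (fun s => f s + g s) = percExp p E f + percExp p E g := by
  simp [percExp, mul_add, Finset.sum_add_distrib]

lemma percExp_const_mul (E : Finset α) (c : ℝ) (f : Finset α → ℝ) :
    percExp p E (fun s => c * f s) = c * percExp p E f := by
  simp only [percExp, Finset.mul_sum]
  exact Finset.sum_congr rfl fun s _ => by ring

lemma percExp_sum {ι : Type} (I : Finset ι) (E : Finset α) (f : ι → Finset α → ℝ) :
    percExp p E (fun s => ∑ i ∈ I, f i s) = ∑ i ∈ I, percExp p E (f i) := by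
  simp only [percExp, Finset.mul_sum]
  exact Finset.sum_comm

lemma percExp_mono (hp : 0 ≤ p) (hp1 : p ≤ 1) {E : Finset α} {f g : Finset α → ℝ}
    (h : ∀ s ⊆ E, f s ≤ g s) : percExp p E f ≤ percExp p E g := by
  refine Finset.sum_le_sum fun s hs => mul_le_mul_of_nonneg_left (h s (Finset.mem_powerset.1 hs)) ?_
  have : 0 ≤ 1 - p := by linarith
  positivity

variable [DecidableEq α]

lemma percExp_insert {e : α} {E : Finset α} (he : e ∉ E) (f : Finset α → ℝ) :
    percExp p (insert e E) f =
      p * percExp p E (fun s => f (insert e s)) + (1 - p) * percExp p E f := by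
  unfold percExp
  rw [Finset.sum_powerset_insert he, add_comm, Finset.mul_sum, Finset.mul_sum]
  congr 1
  · refine Finset.sum_congr rfl fun s hs => ?_
    have hs' := Finset.mem_powerset.1 hs
    rw [Finset.card_insert_of_notMem (fun h => he (hs' h)), Finset.card_insert_of_notMem he,
      Nat.add_sub_add_right]
    ring
  · refine Finset.sum_congr rfl fun s hs => ?_
    have hc := Finset.card_le_card (Finset.mem_powerset.1 hs)
    rw [Finset.card_insert_of_notMem he, Nat.sub_add_comm hc]
    ring

lemma percExp_const (E : Finset α) (c : ℝ) : percExp p E (fun _ => c) = c := by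
  induction E using Finset.induction_on with
  | empty => rw [percExp_empty]
  | insert e E he ih => rw [percExp_insert he, ih]; ring

/-- Keeping elements with probability `p₁`, then adding elements with probability `p₂`. -/
lemma percExp_union {p₁ p₂ : ℝ} (h : 1 - p = (1 - p₁) * (1 - p₂)) (E : Finset α)
    (f : Finset α → ℝ) :
    percExp p E f = percExp p₁ E (fun s => percExp p₂ E (fun t => f (s ∪ t))) := by
  induction E using Finset.induction_on generalizing f with
  | empty => simp [percExp_empty]
  | insert e E he ih =>
    simp only [percExp_insert he, percExp_add, percExp_const_mul, Finset.insert_union,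
      Finset.union_insert, Finset.insert_idem]
    rw [ih f, ih (fun s => f (insert e s))]
    obtain rfl : p = 1 - (1 - p₁) * (1 - p₂) := by linarith
    ring

/-- `f s` is determined by the part of `s` inside `F`. -/
def DependsOnly {β : Type} (f : Finset α → β) (F : Finset α) : Prop :=
  ∀ e ∉ F, ∀ s, f (insert e s) = f s

lemma DependsOnly.insert {β : Type} {f : Finset α → β} {F : Finset α} (h : DependsOnly f F)
    (a : α) : DependsOnly (fun s => f (insert a s)) F := by
  intro e he s
  change f (Insert.insert a (Insert.insert e s)) = f (Insert.insert a s)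
  rw [Finset.insert_comm, h e he]

lemma percExp_mul {F₁ F₂ : Finset α} (hF : Disjoint F₁ F₂) (E : Finset α) {f g : Finset α → ℝ}
    (hf : DependsOnly f F₁) (hg : DependsOnly g F₂) :
    percExp p E (fun s => f s * g s) = percExp p E f * percExp p E g := by
  induction E using Finset.induction_on generalizing f g with
  | empty => simp [percExp_empty]
  | insert e E he ih =>
    simp only [percExp_insert he]
    rw [ih hf hg, ih (hf.insert e) (hg.insert e)]
    by_cases h1 : e ∈ F₁
    · have h2 : e ∉ F₂ := Finset.disjoint_left.1 hF h1
      simp only [hg e h2]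
      ring
    · simp only [hf e h1]
      ring

lemma percExp_prod {ι : Type} [DecidableEq ι] (I : Finset ι) (F : ι → Finset α)
    (hF : ∀ i ∈ I, ∀ j ∈ I, i ≠ j → Disjoint (F i) (F j)) (E : Finset α) (f : ι → Finset α → ℝ)
    (hf : ∀ i ∈ I, DependsOnly (f i) (F i)) :
    percExp p E (fun s => ∏ i ∈ I, f i s) = ∏ i ∈ I, percExp p E (f i) := by
  induction I using Finset.induction_on with
  | empty => simp [percExp_const]
  | insert a I ha ih =>
    simp only [Finset.prod_insert ha]
    rw [← ih (fun i hi j hj => hF i (by simp [hi]) j (by simp [hj]))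
      (fun i hi => hf i (by simp [hi]))]
    refine percExp_mul (F₁ := F a) (F₂ := I.biUnion F) ?_ E (hf a (by simp)) ?_
    · rw [Finset.disjoint_biUnion_right]
      exact fun i hi => hF a (by simp) i (by simp [hi]) (fun h => ha (h ▸ hi))
    · intro e he s
      refine Finset.prod_congr rfl fun i hi => hf i (by simp [hi]) e (fun h => he ?_) s
      exact Finset.mem_biUnion.2 ⟨i, hi, h⟩

lemma percExp_mem {e : α} {E : Finset α} (he : e ∈ E) :
    percExp p E (fun s => if e ∈ s then 1 else 0) = p := by
  rw [← Finset.insert_erase he, percExp_insert (by simp)]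
  have : percExp p (E.erase e) (fun s => if e ∈ s then (1 : ℝ) else 0) =
      percExp p (E.erase e) (fun _ => 0) := by
    refine Finset.sum_congr rfl fun s hs => ?_
    have : e ∉ s := fun h => by simpa using Finset.mem_powerset.1 hs h
    simp [this]
  simp [this, percExp_const]

lemma dependsOnly_mem (e : α) :
    DependsOnly (fun s : Finset α => if e ∈ s then (1 : ℝ) else 0) {e} := by
  intro a ha s
  have : e ≠ a := fun h => ha (by simp [h])
  simp [this]

lemma percExp_subset {F E : Finset α} (hF : F ⊆ E) :
    percExp p E (fun s => if F ⊆ s then 1 else 0) = p ^ F.card := by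
  have h : (fun s : Finset α => if F ⊆ s then (1 : ℝ) else 0) =
      fun s => ∏ e ∈ F, if e ∈ s then 1 else 0 := by
    funext s
    rw [Finset.prod_ite_zero]
    simp [Finset.subset_iff]
  rw [h, percExp_prod F (fun e => {e}) (by simp) E _ (fun e _ => dependsOnly_mem e),
    Finset.prod_congr rfl (fun e he => percExp_mem (hF he)), Finset.prod_const]

/-- The probability that none of several disjoint small sets is entirely kept. -/
lemma percExp_forall_not_subset_le (hp : 0 ≤ p) (hp1 : p ≤ 1) {E : Finset α} {L m : ℕ}
    (f : ℕ → Finset α) (hfE : ∀ i < m, f i ⊆ E) (hfL : ∀ i < m, (f i).card ≤ L)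
    (hdisj : ∀ i < m, ∀ j < m, i ≠ j → Disjoint (f i) (f j)) :
    percExp p E (fun s => if ∀ i < m, ¬ f i ⊆ s then 1 else 0) ≤ (1 - p ^ L) ^ m := by
  have h : (fun s : Finset α => if ∀ i < m, ¬ f i ⊆ s then (1 : ℝ) else 0) =
      fun s => ∏ i ∈ Finset.range m, (1 + (-1) * if f i ⊆ s then 1 else 0) := by
    funext s
    split_ifs with h
    · refine (Finset.prod_eq_one fun i hi => ?_).symm
      simp [h i (Finset.mem_range.1 hi)]
    · push Not at h
      obtain ⟨i, hi, his⟩ := h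
      exact (Finset.prod_eq_zero (Finset.mem_range.2 hi) (by simp [his])).symm
  rw [h, percExp_prod (Finset.range m) f
    (fun i hi j hj => hdisj i (Finset.mem_range.1 hi) j (Finset.mem_range.1 hj)) E]
  · calc _ ≤ ∏ i ∈ Finset.range m, (1 - p ^ L) := by
          refine Finset.prod_le_prod (fun i hi => ?_) (fun i hi => ?_) <;>
            rw [percExp_add, percExp_const, percExp_const_mul,
              percExp_subset (hfE i (Finset.mem_range.1 hi))]
          · have := pow_le_one₀ hp hp1 (n := (f i).card)
            linarith
          · have := pow_le_pow_of_le_one hp hp1 (hfL i (Finset.mem_range.1 hi))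
            linarith
      _ = _ := by simp
  · intro i _ e he s
    have : f i ⊆ insert e s ↔ f i ⊆ s := Finset.subset_insert_iff_of_notMem he
    simp only [this]

lemma mix_exp_le (hp : 0 ≤ p) (hp1 : p ≤ 1) {x y r : ℝ} (h : |x - y| ≤ r) (hr : r ≤ 1) :
    p * Real.exp x + (1 - p) * Real.exp y ≤ Real.exp (p * x + (1 - p) * y + r ^ 2) := by
  obtain ⟨m, hm⟩ : ∃ m, m = p * x + (1 - p) * y := ⟨_, rfl⟩
  have key : ∀ z : ℝ, |z| ≤ r → Real.exp z ≤ 1 + z + r ^ 2 := by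
    intro z hz
    have h1 := Real.abs_exp_sub_one_sub_id_le (hz.trans hr)
    have h2 : z ^ 2 ≤ r ^ 2 := sq_le_sq' (by linarith [neg_abs_le z]) (by linarith [le_abs_self z])
    have := le_abs_self (Real.exp z - 1 - z)
    linarith
  have hx : |x - m| ≤ r := by
    have : x - m = (1 - p) * (x - y) := by rw [hm]; ring
    rw [this, abs_mul, abs_of_nonneg (by linarith)]
    nlinarith [abs_nonneg (x - y)]
  have hy : |y - m| ≤ r := by
    have : y - m = -(p * (x - y)) := by rw [hm]; ring
    rw [this, abs_neg, abs_mul, abs_of_nonneg hp]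
    nlinarith [abs_nonneg (x - y)]
  have e1 : Real.exp x = Real.exp m * Real.exp (x - m) := by rw [← Real.exp_add]; ring_nf
  have e2 : Real.exp y = Real.exp m * Real.exp (y - m) := by rw [← Real.exp_add]; ring_nf
  rw [← hm, e1, e2, Real.exp_add]
  have h3 : p * Real.exp (x - m) + (1 - p) * Real.exp (y - m) ≤ Real.exp (r ^ 2) := by
    have h4 := mul_le_mul_of_nonneg_left (key _ hx) hp
    have h5 := mul_le_mul_of_nonneg_left (key _ hy) (by linarith : 0 ≤ 1 - p)
    have h6 := Real.add_one_le_exp (r ^ 2)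
    have h7 : p * (1 + (x - m) + r ^ 2) + (1 - p) * (1 + (y - m) + r ^ 2) = 1 + r ^ 2 := by
      rw [hm]; ring
    linarith
  calc _ = Real.exp m * (p * Real.exp (x - m) + (1 - p) * Real.exp (y - m)) := by ring
    _ ≤ _ := mul_le_mul_of_nonneg_left h3 (Real.exp_pos _).le

lemma abs_percExp_sub_le (hp : 0 ≤ p) (hp1 : p ≤ 1) {E : Finset α} {f g : Finset α → ℝ} {c : ℝ}
    (h : ∀ s, |f s - g s| ≤ c) : |percExp p E f - percExp p E g| ≤ c := by
  have h1 : percExp p E f ≤ percExp p E (fun s => g s + c) :=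
    percExp_mono hp hp1 fun s _ => by linarith [(abs_le.1 (h s)).2]
  have h2 : percExp p E g ≤ percExp p E (fun s => f s + c) :=
    percExp_mono hp hp1 fun s _ => by linarith [(abs_le.1 (h s)).1]
  rw [percExp_add, percExp_const] at h1 h2
  exact abs_le.2 ⟨by linarith, by linarith⟩

/-- Exponential moments of a function with bounded differences. -/
lemma percExp_exp_le (hp : 0 ≤ p) (hp1 : p ≤ 1) {c : ℝ} (hc : c ≤ 1) (E : Finset α)
    {f : Finset α → ℝ} (hf : ∀ e s, |f (insert e s) - f s| ≤ c) :
    percExp p E (fun s => Real.exp (f s)) ≤ Real.exp (percExp p E f + E.card * c ^ 2) := by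
  induction E using Finset.induction_on generalizing f with
  | empty => simp [percExp_empty]
  | insert e E he ih =>
    rw [percExp_insert he, percExp_insert he]
    have h1 := ih hf
    have h2 := ih (f := fun s => f (insert e s)) (fun a s => by
      simpa [Finset.insert_comm] using hf a (insert e s))
    have h3 := abs_percExp_sub_le hp hp1 (E := E) (hf e)
    refine (add_le_add (mul_le_mul_of_nonneg_left h2 hp)
      (mul_le_mul_of_nonneg_left h1 (by linarith : 0 ≤ 1 - p))).trans ?_
    refine (mix_exp_le hp hp1 (r := c) (by simpa using h3) hc).trans
      (Real.exp_le_exp.2 (le_of_eq ?_))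
    rw [Finset.card_insert_of_notMem he]
    push_cast
    ring

/-- McDiarmid-type upper tail for a function with bounded differences. -/
lemma percExp_tail_le (hp : 0 ≤ p) (hp1 : p ≤ 1) {K l a : ℝ} (hl : 0 ≤ l)
    (hlK : l * K ≤ 1) (E : Finset α) {f : Finset α → ℝ}
    (hf : ∀ e s, |f (insert e s) - f s| ≤ K) :
    percExp p E (fun s => if percExp p E f + a ≤ f s then 1 else 0) ≤
      Real.exp (E.card * (l * K) ^ 2 - l * a) := by
  have h1 := percExp_exp_le hp hp1 hlK E (f := fun s => l * f s) (fun e s => by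
    rw [← mul_sub, abs_mul, abs_of_nonneg hl]
    exact mul_le_mul_of_nonneg_left (hf e s) hl)
  rw [percExp_const_mul] at h1
  have h2 : percExp p E (fun s => if percExp p E f + a ≤ f s then 1 else 0) ≤
      percExp p E (fun s => Real.exp (-(l * (percExp p E f + a))) * Real.exp (l * f s)) := by
    refine percExp_mono hp hp1 fun s _ => ?_
    rw [← Real.exp_add]
    split_ifs with h
    · refine Real.one_le_exp ?_
      nlinarith
    · exact (Real.exp_pos _).le
  rw [percExp_const_mul] at h2
  refine h2.trans ((mul_le_mul_of_nonneg_left h1 (Real.exp_pos _).le).trans ?_)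
  rw [← Real.exp_add]
  refine Real.exp_le_exp.2 (le_of_eq ?_)
  ring

end Expectation

section HighGirth

variable {G : SimpleGraph V}

omit [DecidableEq V] in
lemma mem_edgeFinset' {e : Sym2 V} : e ∈ edgeFinset' G ↔ e ∈ G.edgeSet := by
  simp [edgeFinset']

omit [Fintype V] in
lemma isAcyclic_fromEdgeSet {T : Finset (Sym2 V)} (hT : ∀ e ∈ T, e ∈ G.edgeSet)
    (hcard : T.card < G.girth) : (SimpleGraph.fromEdgeSet (T : Set (Sym2 V))).IsAcyclic := by
  intro a c hc
  have hle : SimpleGraph.fromEdgeSet (T : Set (Sym2 V)) ≤ G := by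
    intro x y h
    exact hT _ (by simpa using ((SimpleGraph.fromEdgeSet_adj _).1 h).1)
  have h1 := SimpleGraph.girth_le_length (hc.mapLe hle)
  rw [SimpleGraph.Walk.length_map, ← SimpleGraph.Walk.length_edges,
    ← List.toFinset_card_of_nodup hc.isTrail.edges_nodup] at h1
  have h2 : c.edges.toFinset ⊆ T := by
    intro e he
    have := c.edges_subset_edgeSet (List.mem_toFinset.1 he)
    rw [SimpleGraph.edgeSet_fromEdgeSet] at this
    simpa using this.1
  have := Finset.card_le_card h2
  omega

omit [Fintype V] [DecidableEq V] in
lemma mem_edgeSet_fromEdgeSet {T : Finset (Sym2 V)} (hT : ∀ e ∈ T, e ∈ G.edgeSet) {e : Sym2 V}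
    (he : e ∈ T) : e ∈ (SimpleGraph.fromEdgeSet (T : Set (Sym2 V))).edgeSet := by
  rw [SimpleGraph.edgeSet_fromEdgeSet]
  exact ⟨by simpa using he, G.not_isDiag_of_mem_edgeSet (hT e he)⟩

omit [Fintype V] in
/-- Two non-backtracking walks with the same ends are equal if they are short. -/
lemma eq_of_isChain_edges {v x : V} (p q : G.Walk v x)
    (hp : p.edges.IsChain (· ≠ ·)) (hq : q.edges.IsChain (· ≠ ·))
    (hlen : p.length + q.length < G.girth) : p = q := by
  have hT : ∀ e ∈ (p.edges ++ q.edges).toFinset, e ∈ G.edgeSet := by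
    intro e he
    rcases List.mem_append.1 (List.mem_toFinset.1 he) with h | h
    · exact p.edges_subset_edgeSet h
    · exact q.edges_subset_edgeSet h
  have hac := isAcyclic_fromEdgeSet hT (by
    refine (List.toFinset_card_le _).trans_lt ?_
    simpa using hlen)
  have hpT : ∀ e ∈ p.edges, e ∈ (SimpleGraph.fromEdgeSet
      ((p.edges ++ q.edges).toFinset : Set (Sym2 V))).edgeSet := fun e he =>
    mem_edgeSet_fromEdgeSet hT (by simp [he])
  have hqT : ∀ e ∈ q.edges, e ∈ (SimpleGraph.fromEdgeSet
      ((p.edges ++ q.edges).toFinset : Set (Sym2 V))).edgeSet := fun e he =>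
    mem_edgeSet_fromEdgeSet hT (by simp [he])
  have hp' := (hac.isPath_iff_isChain (p.transfer _ hpT)).2 (by rwa [p.edges_transfer])
  have hq' := (hac.isPath_iff_isChain (q.transfer _ hqT)).2 (by rwa [q.edges_transfer])
  have h := congrArg SimpleGraph.Walk.support
    (congrArg Subtype.val ((hac.subsingleton_path v x).elim ⟨_, hp'⟩ ⟨_, hq'⟩))
  simp only [SimpleGraph.Walk.support_transfer] at h
  exact SimpleGraph.Walk.ext_support h

omit [Fintype V] in
lemma isPath_of_isChain_edges {v x : V} (p : G.Walk v x) (hp : p.edges.IsChain (· ≠ ·))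
    (hlen : p.length < G.girth) : p.IsPath := by
  have hT : ∀ e ∈ p.edges.toFinset, e ∈ G.edgeSet := fun e he =>
    p.edges_subset_edgeSet (List.mem_toFinset.1 he)
  have hac := isAcyclic_fromEdgeSet hT
    ((List.toFinset_card_le _).trans_lt (by simpa using hlen))
  have hpT : ∀ e ∈ p.edges, e ∈ (SimpleGraph.fromEdgeSet
      (p.edges.toFinset : Set (Sym2 V))).edgeSet := fun e he =>
    mem_edgeSet_fromEdgeSet hT (by simp [he])
  have hp' := (hac.isPath_iff_isChain (p.transfer _ hpT)).2 (by rwa [p.edges_transfer])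
  rw [SimpleGraph.Walk.isPath_def] at hp' ⊢
  simpa using hp'

/-- The neighbours of `v` as a finset. -/
def nbrs (G : SimpleGraph V) (v : V) : Finset V := Finset.univ.filter (G.Adj v)

omit [DecidableEq V] in
lemma mem_nbrs {v w : V} : w ∈ nbrs G v ↔ G.Adj v w := by simp [nbrs]

omit [DecidableEq V] in
lemma card_nbrs (v : V) : (nbrs G v).card = (G.neighborSet v).ncard := by
  rw [← Set.ncard_coe_finset]
  congr 1
  ext w
  simp [nbrs]

/-- Some non-backtracking walk of length `k` from `v`, not starting with the edge to `u`,
uses only edges in `s`. -/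
def LongBranch (G : SimpleGraph V) (s : Finset (Sym2 V)) : ℕ → V → V → Prop
  | 0, _, _ => True
  | k + 1, u, v => ∃ w ∈ (nbrs G v).erase u, s(v, w) ∈ s ∧ LongBranch G s k v w

/-- The edges which the event `LongBranch` depends on. -/
def branchEdges (G : SimpleGraph V) : ℕ → V → V → Finset (Sym2 V)
  | 0, _, _ => ∅
  | k + 1, u, v => ((nbrs G v).erase u).biUnion fun w => insert s(v, w) (branchEdges G k v w)

lemma LongBranch.mono {s t : Finset (Sym2 V)} (hst : s ⊆ t) {k : ℕ} {u v : V}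
    (h : LongBranch G s k u v) : LongBranch G t k u v := by
  induction k generalizing u v with
  | zero => trivial
  | succ k ih =>
    obtain ⟨w, hw, hs, hl⟩ := h
    exact ⟨w, hw, hst hs, ih hl⟩

lemma longBranch_insert {k : ℕ} {u v : V} {e : Sym2 V} (he : e ∉ branchEdges G k u v)
    (s : Finset (Sym2 V)) : LongBranch G (insert e s) k u v ↔ LongBranch G s k u v := by
  induction k generalizing u v with
  | zero => rfl
  | succ k ih =>
    simp only [LongBranch]
    refine exists_congr fun w => and_congr_right fun hw => ?_
    have h1 : e ∉ insert s(v, w) (branchEdges G k v w) := fun h =>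
      he (Finset.mem_biUnion.2 ⟨w, hw, h⟩)
    rw [Finset.mem_insert, not_or] at h1
    rw [ih h1.2, Finset.mem_insert, or_iff_right (Ne.symm h1.1)]

lemma exists_walk_of_mem_branchEdges {k : ℕ} {v w : V} (hvw : G.Adj v w) {e : Sym2 V}
    (he : e ∈ insert s(v, w) (branchEdges G k v w)) :
    ∃ (x y : V) (q : G.Walk v x) (h : G.Adj x y), e = s(x, y) ∧
      (q.concat h).edges.IsChain (· ≠ ·) ∧ q.length ≤ k ∧
      (q.concat h).edges.head? = some s(v, w) := by
  induction k generalizing v w with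
  | zero =>
    obtain rfl : e = s(v, w) := by simpa [branchEdges] using he
    exact ⟨v, w, .nil, hvw, rfl, by simp [SimpleGraph.Walk.concat], by simp,
      by simp [SimpleGraph.Walk.concat]⟩
  | succ k ih =>
    rcases Finset.mem_insert.1 he with rfl | he
    · exact ⟨v, w, .nil, hvw, rfl, by simp [SimpleGraph.Walk.concat], by simp,
        by simp [SimpleGraph.Walk.concat]⟩
    · obtain ⟨z, hz, he⟩ := Finset.mem_biUnion.1 he
      obtain ⟨hzv, hz⟩ := Finset.mem_erase.1 hz
      obtain ⟨x, y, q, h, hexy, hch, hlen, hhd⟩ := ih (mem_nbrs.1 hz) he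
      refine ⟨x, y, .cons hvw q, h, hexy, ?_, by simpa using hlen, ?_⟩
      · rw [SimpleGraph.Walk.concat_cons, SimpleGraph.Walk.edges_cons, List.isChain_cons, hhd]
        refine ⟨fun a ha => ?_, hch⟩
        obtain rfl : s(w, z) = a := by simpa using ha
        intro h
        rw [Sym2.eq_swap, Sym2.congr_right] at h
        exact hzv h.symm
      · simp [SimpleGraph.Walk.concat_cons]

lemma disjoint_branchEdges {k : ℕ} (hk : 2 * k + 2 < G.girth) {v w w' : V} (hw : G.Adj v w)
    (hw' : G.Adj v w') (hne : w ≠ w') :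
    Disjoint (insert s(v, w) (branchEdges G k v w)) (insert s(v, w') (branchEdges G k v w')) := by
  rw [Finset.disjoint_left]
  intro e he he'
  obtain ⟨x, y, q, h, hexy, hch, hlen, hhd⟩ := exists_walk_of_mem_branchEdges hw he
  obtain ⟨x', y', q', h', hexy', hch', hlen', hhd'⟩ := exists_walk_of_mem_branchEdges hw' he'
  rcases Sym2.eq_iff.1 (hexy.symm.trans hexy') with ⟨rfl, rfl⟩ | ⟨rfl, rfl⟩
  · have := eq_of_isChain_edges _ _ hch hch' (by simp; omega)
    rw [this, hhd'] at hhd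
    simp only [Option.some.injEq, Sym2.congr_right] at hhd
    exact hne hhd.symm
  · rw [SimpleGraph.Walk.edges_concat, List.concat_eq_append] at hch
    have := eq_of_isChain_edges q _ (List.isChain_append.1 hch).1 hch' (by simp; omega)
    rw [this, SimpleGraph.Walk.edges_concat, List.concat_eq_append, List.append_assoc] at hch
    have := (List.isChain_append.1 hch).2.1
    simp [Sym2.eq_swap] at this

lemma notMem_branchEdges {k : ℕ} (hk : 2 * k < G.girth) {v w : V} (hw : G.Adj v w) :
    s(v, w) ∉ branchEdges G k v w := by
  cases k with
  | zero => simp [branchEdges]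
  | succ k =>
    intro h
    obtain ⟨z, hz, he⟩ := Finset.mem_biUnion.1 h
    obtain ⟨hzv, hz⟩ := Finset.mem_erase.1 hz
    refine Finset.disjoint_left.1 (disjoint_branchEdges (k := k) (by omega) (mem_nbrs.1 hz)
      hw.symm hzv) he ?_
    rw [Sym2.eq_swap]
    exact Finset.mem_insert_self _ _

lemma card_erase_nbrs {d : ℕ} (hd : ∀ v, (nbrs G v).card = d) {u v : V} (h : G.Adj u v) :
    ((nbrs G v).erase u).card = d - 1 := by
  rw [Finset.card_erase_of_mem (mem_nbrs.2 h.symm), hd]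

/-- Probability that a branching process with binomial offspring reaches generation `k`. -/
def survival (p : ℝ) (m : ℕ) : ℕ → ℝ
  | 0 => 1
  | k + 1 => 1 - (1 - p * survival p m k) ^ m

lemma percExp_longBranch {d : ℕ} (hd : ∀ v, (nbrs G v).card = d) {p : ℝ} {k : ℕ}
    (hk : 2 * k < G.girth) {u v : V} (huv : G.Adj u v) :
    percExp p (edgeFinset' G) (fun s => if LongBranch G s k u v then 1 else 0) =
      survival p (d - 1) k := by
  induction k generalizing u v with
  | zero => simp [LongBranch, survival, percExp_const]
  | succ k ih =>
    have h : (fun s : Finset (Sym2 V) => if LongBranch G s (k + 1) u v then (1 : ℝ) else 0) =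
        fun s => 1 + (-1) * ∏ w ∈ (nbrs G v).erase u, (1 + (-1) *
          ((if s(v, w) ∈ s then 1 else 0) * (if LongBranch G s k v w then 1 else 0))) := by
      funext s
      split_ifs with h
      · obtain ⟨w, hw, hs, hl⟩ := h
        rw [Finset.prod_eq_zero hw (by simp [hs, hl])]
        simp
      · rw [Finset.prod_eq_one]
        · simp
        · intro w hw
          by_cases hs : s(v, w) ∈ s
          · have : ¬ LongBranch G s k v w := fun hl => h ⟨w, hw, hs, hl⟩
            simp [this]
          · simp [hs]
    have hdep : ∀ w, DependsOnly (fun s => if LongBranch G s k v w then (1 : ℝ) else 0)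
        (branchEdges G k v w) := fun w e he s => by simp only [longBranch_insert he]
    rw [h, percExp_add, percExp_const, percExp_const_mul,
      percExp_prod _ (fun w => insert s(v, w) (branchEdges G k v w))]
    · rw [Finset.prod_congr rfl (g := fun _ => 1 - p * survival p (d - 1) k)]
      · rw [Finset.prod_const, card_erase_nbrs hd huv, survival]
        ring
      · intro w hw
        have hvw := mem_nbrs.1 (Finset.mem_of_mem_erase hw)
        rw [percExp_add, percExp_const, percExp_const_mul,
          percExp_mul (F₁ := {s(v, w)}) (F₂ := branchEdges G k v w) _ _ (dependsOnly_mem _)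
            (hdep w), percExp_mem (mem_edgeFinset'.2 hvw), ih (by omega) hvw]
        · ring
        · simpa using notMem_branchEdges (by omega) hvw
    · intro w hw w' hw' hne
      exact disjoint_branchEdges (by omega) (mem_nbrs.1 (Finset.mem_of_mem_erase hw))
        (mem_nbrs.1 (Finset.mem_of_mem_erase hw')) hne
    · intro w _ e he s
      rw [Finset.mem_insert, not_or] at he
      simp only [longBranch_insert he.2, Finset.mem_insert, or_iff_right (Ne.symm he.1)]

lemma pow_le_card_branchEdges {d : ℕ} (hd3 : 3 ≤ d) (hd : ∀ v, (nbrs G v).card = d) {k : ℕ}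
    (hk : 2 * k < G.girth) {u v : V} (huv : G.Adj u v) :
    2 ^ (k + 1) ≤ (branchEdges G k u v).card + 2 := by
  induction k generalizing u v with
  | zero => simp [branchEdges]
  | succ k ih =>
    have h2 : 2 ≤ ((nbrs G v).erase u).card := by rw [card_erase_nbrs hd huv]; omega
    have h1 : ∀ w ∈ (nbrs G v).erase u,
        2 ^ (k + 1) - 1 ≤ (insert s(v, w) (branchEdges G k v w)).card := by
      intro w hw
      have hvw := mem_nbrs.1 (Finset.mem_of_mem_erase hw)
      have := ih (by omega) hvw
      rw [Finset.card_insert_of_notMem (notMem_branchEdges (by omega) hvw)]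
      omega
    have h3 := Finset.sum_le_sum h1
    rw [branchEdges, Finset.card_biUnion fun w hw w' hw' hne =>
      disjoint_branchEdges (by omega) (mem_nbrs.1 (Finset.mem_of_mem_erase hw))
        (mem_nbrs.1 (Finset.mem_of_mem_erase hw')) hne]
    rw [Finset.sum_const, smul_eq_mul] at h3
    have h4 := Nat.mul_le_mul_right (2 ^ (k + 1) - 1) h2
    have := pow_succ 2 (k + 1)
    omega

lemma branchEdges_subset (k : ℕ) (u v : V) : branchEdges G k u v ⊆ edgeFinset' G := by
  induction k generalizing u v with
  | zero => simp [branchEdges]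
  | succ k ih =>
    refine Finset.biUnion_subset.2 fun w hw => Finset.insert_subset ?_ (ih v w)
    exact mem_edgeFinset'.2 (mem_nbrs.1 (Finset.mem_of_mem_erase hw))

lemma card_edgeFinset'_le {d : ℕ} (hd : ∀ v, (nbrs G v).card = d) :
    (edgeFinset' G).card ≤ d * Fintype.card V := by
  have h : edgeFinset' G ⊆ Finset.univ.biUnion fun v => (nbrs G v).image fun w => s(v, w) := by
    intro e he
    induction e with
    | _ x y =>
      exact Finset.mem_biUnion.2 ⟨x, Finset.mem_univ _,
        Finset.mem_image.2 ⟨y, mem_nbrs.2 (mem_edgeFinset'.1 he), rfl⟩⟩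
  refine (Finset.card_le_card h).trans ((Finset.card_biUnion_le_card_mul _ _ d ?_).trans ?_)
  · exact fun v _ => Finset.card_image_le.trans (hd v).le
  · rw [Finset.card_univ, mul_comm]

/-- A regular graph of large girth has many vertices. -/
lemma pow_le_mul_card {d R : ℕ} (hd3 : 3 ≤ d) (hd : ∀ v, (nbrs G v).card = d) (hR : 1 ≤ R)
    (hg : 2 * R < G.girth) : 2 ^ R ≤ d * Fintype.card V := by
  have hac : ¬ G.IsAcyclic := by
    intro h
    rw [SimpleGraph.girth, SimpleGraph.egirth_eq_top.2 h] at hg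
    simp at hg
  have hne : Nonempty V := by
    by_contra h
    rw [not_nonempty_iff] at h
    exact hac SimpleGraph.IsAcyclic.of_subsingleton
  obtain ⟨u⟩ := hne
  obtain ⟨v, hv⟩ := Finset.card_pos.1 (by rw [hd u]; omega : 0 < (nbrs G u).card)
  have h1 := pow_le_card_branchEdges hd3 hd hg (mem_nbrs.1 hv)
  have h2 := Finset.card_le_card (branchEdges_subset (G := G) R u v)
  have h3 := card_edgeFinset'_le hd
  have h4 := pow_succ 2 R
  have h5 := Nat.pow_le_pow_right (n := 2) (by norm_num) hR
  omega

end HighGirth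

section Concentration

variable {G : SimpleGraph V}

/-- The ordered pairs of adjacent vertices. -/
def dartPairs (G : SimpleGraph V) : Finset (V × V) :=
  Finset.univ.filter fun x => G.Adj x.1 x.2

/-- The number of darts with a long branch. -/
def numLong (G : SimpleGraph V) (k : ℕ) (s : Finset (Sym2 V)) : ℝ :=
  ∑ x ∈ dartPairs G, if LongBranch G s k x.1 x.2 then 1 else 0

omit [DecidableEq V] in
lemma mem_dartPairs {x : V × V} : x ∈ dartPairs G ↔ G.Adj x.1 x.2 := by simp [dartPairs]

omit [DecidableEq V] in
lemma card_dartPairs {d : ℕ} (hd : ∀ v, (nbrs G v).card = d) :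
    (dartPairs G).card = d * Fintype.card V := by
  rw [dartPairs, Finset.card_filter, ← Finset.univ_product_univ, Finset.sum_product]
  simp only [← Finset.card_filter]
  change ∑ v, (nbrs G v).card = _
  simp [hd, mul_comm]

lemma percExp_numLong {d : ℕ} (hd : ∀ v, (nbrs G v).card = d) {p : ℝ} {k : ℕ}
    (hk : 2 * k < G.girth) :
    percExp p (edgeFinset' G) (numLong G k) = d * Fintype.card V * survival p (d - 1) k := by
  have h : numLong G k = fun s => ∑ x ∈ dartPairs G,
    if LongBranch G s k x.1 x.2 then (1 : ℝ) else 0 := rfl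
  rw [h, percExp_sum,
    Finset.sum_congr rfl fun x hx => percExp_longBranch hd hk (mem_dartPairs.1 hx),
    Finset.sum_const, card_dartPairs hd]
  simp

/-- A bound for the number of darts whose branch of depth `k` contains a given edge. -/
def influence (d : ℕ) : ℕ → ℕ
  | 0 => 0
  | k + 1 => (2 + influence d k) * d

lemma card_filter_mem_branchEdges_le {d : ℕ} (hd : ∀ v, (nbrs G v).card = d) (k : ℕ)
    (e : Sym2 V) :
    ((dartPairs G).filter fun x => e ∈ branchEdges G k x.1 x.2).card ≤ influence d k := by
  induction k with
  | zero => simp [branchEdges, influence]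
  | succ k ih =>
    set A := (dartPairs G).filter fun x => e ∈ branchEdges G k x.1 x.2
    have hsub : ((dartPairs G).filter fun x => e ∈ branchEdges G (k + 1) x.1 x.2) ⊆
        ((Finset.univ.filter (· ∈ e)) ∪ A.image Prod.fst).biUnion
          fun v => (nbrs G v).image fun u => (u, v) := by
      rintro ⟨u, v⟩ hx
      obtain ⟨hx, he⟩ := Finset.mem_filter.1 hx
      obtain ⟨w, hw, he⟩ := Finset.mem_biUnion.1 he
      refine Finset.mem_biUnion.2 ⟨v, ?_, Finset.mem_image.2
        ⟨u, mem_nbrs.2 (mem_dartPairs.1 hx).symm, rfl⟩⟩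
      rcases Finset.mem_insert.1 he with rfl | he
      · simp
      · refine Finset.mem_union_right _ (Finset.mem_image.2 ⟨(v, w), ?_, rfl⟩)
        exact Finset.mem_filter.2
          ⟨mem_dartPairs.2 (mem_nbrs.1 (Finset.mem_of_mem_erase hw)), he⟩
    have he2 : (Finset.univ.filter (· ∈ e)).card ≤ 2 := by
      induction e with
      | _ a b =>
        refine (Finset.card_le_card (t := {a, b}) fun z hz => ?_).trans Finset.card_le_two
        simpa using hz
    refine (Finset.card_le_card hsub).trans ((Finset.card_biUnion_le_card_mul _ _ d
      fun v _ => Finset.card_image_le.trans (hd v).le).trans ?_)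
    refine Nat.mul_le_mul_right d ((Finset.card_union_le _ _).trans ?_)
    exact add_le_add he2 (Finset.card_image_le.trans ih)

lemma abs_numLong_insert_sub_le {d : ℕ} (hd : ∀ v, (nbrs G v).card = d) (k : ℕ)
    (e : Sym2 V) (s : Finset (Sym2 V)) :
    |numLong G k (insert e s) - numLong G k s| ≤ influence d k := by
  rw [numLong, numLong, ← Finset.sum_sub_distrib]
  calc _ ≤ ∑ x ∈ dartPairs G, if e ∈ branchEdges G k x.1 x.2 then (1 : ℝ) else 0 := by
        refine (Finset.abs_sum_le_sum_abs _ _).trans (Finset.sum_le_sum fun x _ => ?_)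
        by_cases he : e ∈ branchEdges G k x.1 x.2
        · rw [if_pos he]
          split_ifs <;> simp
        · rw [if_neg he]
          simp [longBranch_insert he]
    _ = ((dartPairs G).filter fun x => e ∈ branchEdges G k x.1 x.2).card := by
        simp
    _ ≤ _ := by exact_mod_cast card_filter_mem_branchEdges_le hd k e

lemma exists_numLong_tail {d : ℕ} (hd0 : 0 < d) (k : ℕ) {δ : ℝ} (hδ : 0 < δ) :
    ∃ c > (0 : ℝ), ∀ (p : ℝ), 0 ≤ p → p ≤ 1 → ∀ (V : Type) [Fintype V] [DecidableEq V]
      (G : SimpleGraph V), (∀ v, (nbrs G v).card = d) → 2 * k < G.girth →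
      percExp p (edgeFinset' G) (fun s => if d * Fintype.card V * survival p (d - 1) k +
        δ * Fintype.card V ≤ numLong G k s then 1 else 0) ≤ Real.exp (-c * Fintype.card V) ∧
      percExp p (edgeFinset' G) (fun s => if numLong G k s ≤ d * Fintype.card V *
        survival p (d - 1) k - δ * Fintype.card V then 1 else 0) ≤
        Real.exp (-c * Fintype.card V) := by
  obtain ⟨K, hK⟩ : ∃ K : ℝ, K = influence d k := ⟨_, rfl⟩
  have hK0 : 0 ≤ K := by rw [hK]; positivity
  have hd0' : (0 : ℝ) < d := by exact_mod_cast hd0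
  set l := min (1 / (K + 1)) (δ / (2 * d * (K + 1) ^ 2)) with hl
  have hl0 : 0 < l := lt_min (by positivity) (by positivity)
  have hl1 : l * (K + 1) ≤ 1 := by
    have := min_le_left (1 / (K + 1)) (δ / (2 * d * (K + 1) ^ 2))
    rwa [← hl, le_div_iff₀ (by positivity)] at this
  have hl2 : l * (2 * d * (K + 1) ^ 2) ≤ δ := by
    have := min_le_right (1 / (K + 1)) (δ / (2 * d * (K + 1) ^ 2))
    rwa [← hl, le_div_iff₀ (by positivity)] at this
  have hlK : l * K ≤ 1 := by nlinarith
  refine ⟨l * δ / 2, by positivity, fun p hp hp1 V _ _ G hd hg => ?_⟩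
  have hexp : Real.exp ((edgeFinset' G).card * (l * K) ^ 2 - l * (δ * Fintype.card V)) ≤
      Real.exp (-(l * δ / 2) * Fintype.card V) := by
    refine Real.exp_le_exp.2 ?_
    have h1 : ((edgeFinset' G).card : ℝ) ≤ d * Fintype.card V := by
      exact_mod_cast card_edgeFinset'_le hd
    have h2 : d * (l * K) ^ 2 ≤ l * δ / 2 := by
      have : l * (2 * d * K ^ 2) ≤ δ := by
        refine le_trans ?_ hl2
        gcongr
        linarith
      nlinarith
    have h3 : ((edgeFinset' G).card : ℝ) * (l * K) ^ 2 ≤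
        l * δ / 2 * Fintype.card V := by
      calc _ ≤ (d * Fintype.card V : ℝ) * (l * K) ^ 2 := by gcongr
        _ = (d * (l * K) ^ 2) * Fintype.card V := by ring
        _ ≤ _ := by gcongr
    linarith
  have hmean := percExp_numLong hd (p := p) hg
  have habs := abs_numLong_insert_sub_le hd k
  rw [← hK] at habs
  constructor
  · have := percExp_tail_le hp hp1 hl0.le hlK (edgeFinset' G) (a := δ * Fintype.card V) habs
    rw [hmean] at this
    exact this.trans hexp
  · have := percExp_tail_le hp hp1 hl0.le hlK (edgeFinset' G) (a := δ * Fintype.card V)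
      (f := fun s => (-1) * numLong G k s) (fun e s => by
        rw [← mul_sub, abs_mul, abs_neg, abs_one, one_mul]
        exact habs e s)
    rw [percExp_const_mul, hmean] at this
    refine le_trans (le_of_eq ?_) (this.trans hexp)
    congr 1
    funext s
    congr 1
    exact propext ⟨fun h => by linarith, fun h => by linarith⟩

end Concentration

section Components

variable {G H : SimpleGraph V}

omit [DecidableEq V] in
lemma mem_compVerts {c : H.ConnectedComponent} {v : V} :
    v ∈ compVerts H c ↔ H.connectedComponentMk v = c := by simp [compVerts]

omit [DecidableEq V] in
lemma mem_compVerts_of_adj {c : H.ConnectedComponent} {a b : V} (ha : a ∈ compVerts H c)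
    (hab : H.Adj a b) : b ∈ compVerts H c := by
  rw [mem_compVerts] at ha ⊢
  rw [← ha]
  exact SimpleGraph.ConnectedComponent.sound hab.symm.reachable

omit [DecidableEq V] in
lemma compVerts_subset {S : Finset V} (hS : ∀ a ∈ S, ∀ b, H.Adj a b → b ∈ S) {y : V}
    (hy : y ∈ S) : compVerts H (H.connectedComponentMk y) ⊆ S := by
  intro z hz
  obtain ⟨w⟩ := (SimpleGraph.ConnectedComponent.exact (mem_compVerts.1 hz)).symm
  clear hz
  induction w with
  | nil => exact hy
  | cons h _ ih => exact ih (hS _ hy _ h)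

/-- A bound for the number of vertices in a branch of depth less than `k`. -/
def branchSize (d : ℕ) : ℕ → ℕ
  | 0 => 0
  | k + 1 => 1 + d * branchSize d k

lemma exists_closed_of_not_longBranch {d : ℕ} (hd : ∀ v, (nbrs G v).card = d)
    {s : Finset (Sym2 V)} (hs : s ⊆ edgeFinset' G) {k : ℕ} {x y : V}
    (h : ¬ LongBranch G s k x y) :
    ∃ S : Finset V, y ∈ S ∧ S.card ≤ branchSize d k ∧
      ∀ a ∈ S, ∀ b, s(a, b) ∈ s → s(a, b) ≠ s(x, y) → b ∈ S := by
  induction k generalizing x y with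
  | zero => exact absurd trivial h
  | succ k ih =>
    have h' : ∀ w, ∃ S : Finset V, (w ∈ (nbrs G y).erase x → s(y, w) ∈ s → w ∈ S) ∧
        S.card ≤ branchSize d k ∧ ∀ a ∈ S, ∀ b, s(a, b) ∈ s → s(a, b) ≠ s(y, w) → b ∈ S := by
      intro w
      by_cases hw : w ∈ (nbrs G y).erase x ∧ s(y, w) ∈ s
      · obtain ⟨S, h1, h2, h3⟩ := ih (x := y) (y := w) fun hl => h ⟨w, hw.1, hw.2, hl⟩
        exact ⟨S, fun _ _ => h1, h2, h3⟩
      · exact ⟨∅, fun h1 h2 => absurd ⟨h1, h2⟩ hw, by simp, by simp⟩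
    choose S h1 h2 h3 using h'
    refine ⟨insert y ((nbrs G y).biUnion S), by simp, ?_, ?_⟩
    · refine (Finset.card_insert_le _ _).trans ?_
      have := Finset.card_biUnion_le_card_mul (nbrs G y) S _ fun w _ => h2 w
      rw [hd] at this
      rw [branchSize]
      omega
    · intro a ha b hab hne
      rcases Finset.mem_insert.1 ha with rfl | ha
      · have hadj : G.Adj a b := mem_edgeFinset'.1 (hs hab)
        have hbx : b ≠ x := by
          rintro rfl
          exact hne Sym2.eq_swap
        refine Finset.mem_insert_of_mem (Finset.mem_biUnion.2 ⟨b, mem_nbrs.2 hadj, ?_⟩)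
        exact h1 b (Finset.mem_erase.2 ⟨hbx, mem_nbrs.2 hadj⟩) hab
      · obtain ⟨w, hw, haw⟩ := Finset.mem_biUnion.1 ha
        by_cases he : s(a, b) = s(y, w)
        · rcases Sym2.eq_iff.1 he with ⟨rfl, rfl⟩ | ⟨rfl, rfl⟩
          · exact Finset.mem_insert_of_mem (Finset.mem_biUnion.2
              ⟨b, hw, h1 b (Finset.mem_erase.2 ⟨fun hbx => hne (hbx ▸ Sym2.eq_swap), hw⟩) hab⟩)
          · exact Finset.mem_insert_self _ _
        · exact Finset.mem_insert_of_mem (Finset.mem_biUnion.2 ⟨w, hw, h3 w a haw b hab he⟩)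

lemma longBranch_of_eventA {d : ℕ} (hd : ∀ v, (nbrs G v).card = d)
    {s : Finset (Sym2 V)} (hs : s ⊆ edgeFinset' G) {k R : ℕ} (hR : branchSize d k < R) {x y : V}
    (h : eventA (SimpleGraph.fromEdgeSet (s : Set (Sym2 V))) R x y) : LongBranch G s k x y := by
  by_contra hn
  obtain ⟨S, hy, hc, hS⟩ := exists_closed_of_not_longBranch hd hs hn
  have h1 : compVerts ((SimpleGraph.fromEdgeSet (s : Set (Sym2 V))).deleteEdges {s(x, y)}) _ ⊆ S :=
    compVerts_subset (fun a ha b hab => by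
      rw [SimpleGraph.deleteEdges_adj, SimpleGraph.fromEdgeSet_adj] at hab
      exact hS a ha b (by simpa using hab.1.1) (by simpa using hab.2)) hy
  have := Finset.card_le_card h1
  unfold eventA at h
  omega

lemma exists_walk_of_longBranch {s : Finset (Sym2 V)} {k : ℕ} {x y : V}
    (h : LongBranch G s k x y) :
    ∃ (z : V) (q : G.Walk y z), q.length = k ∧ (s(x, y) :: q.edges).IsChain (· ≠ ·) ∧
      ∀ e ∈ q.edges, e ∈ s := by
  induction k generalizing x y with
  | zero => exact ⟨y, .nil, by simp⟩
  | succ k ih =>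
    obtain ⟨w, hw, hs, hl⟩ := h
    obtain ⟨hwx, hw⟩ := Finset.mem_erase.1 hw
    obtain ⟨z, q, hlen, hch, hq⟩ := ih hl
    refine ⟨z, .cons (mem_nbrs.1 hw) q, by simpa using hlen, ?_, by simpa using ⟨hs, hq⟩⟩
    rw [SimpleGraph.Walk.edges_cons, List.isChain_cons_cons]
    refine ⟨fun h => hwx ?_, hch⟩
    rw [Sym2.eq_swap, Sym2.congr_right] at h
    exact h.symm

lemma lt_card_compVerts_of_longBranch {s : Finset (Sym2 V)} {k : ℕ} (hk : k < G.girth) {x y : V}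
    (h : LongBranch G s k x y) :
    k < (compVerts (SimpleGraph.fromEdgeSet (s : Set (Sym2 V)))
      ((SimpleGraph.fromEdgeSet (s : Set (Sym2 V))).connectedComponentMk y)).card := by
  obtain ⟨z, q, hlen, hch, hq⟩ := exists_walk_of_longBranch h
  have hpath := isPath_of_isChain_edges q (List.isChain_cons.1 hch).2 (by omega)
  have hqs : ∀ e ∈ q.edges, e ∈ (SimpleGraph.fromEdgeSet (s : Set (Sym2 V))).edgeSet := by
    intro e he
    rw [SimpleGraph.edgeSet_fromEdgeSet]
    exact ⟨by simpa using hq e he, G.not_isDiag_of_mem_edgeSet (q.edges_subset_edgeSet he)⟩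
  have hsub : q.support.toFinset ⊆ compVerts (SimpleGraph.fromEdgeSet (s : Set (Sym2 V)))
      ((SimpleGraph.fromEdgeSet (s : Set (Sym2 V))).connectedComponentMk y) := by
    intro a ha
    have ha' : a ∈ (q.transfer _ hqs).support := by simpa using ha
    rw [mem_compVerts]
    exact SimpleGraph.ConnectedComponent.sound ((q.transfer _ hqs).takeUntil a ha').reachable.symm
  have := Finset.card_le_card hsub
  rw [List.toFinset_card_of_nodup hpath.support_nodup, SimpleGraph.Walk.length_support] at this
  omega

lemma card_compVerts_le_of_notMem_V1set {d R : ℕ} (hd1 : 1 ≤ d) (hR : 1 ≤ R)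
    (hd : ∀ v, (nbrs G v).card = d) (hHG : H ≤ G) {c : H.ConnectedComponent} {x : V}
    (hx : x ∈ compVerts H c) (hx1 : x ∉ V1set H R) : (compVerts H c).card ≤ d * R := by
  let T : V → Finset V := fun y => if H.Adj x y then compVerts (H.deleteEdges {s(x, y)})
    ((H.deleteEdges {s(x, y)}).connectedComponentMk y) else ∅
  have hT : ∀ y ∈ nbrs G x, (T y).card ≤ R - 1 := by
    intro y _
    by_cases hxy : H.Adj x y
    · have : ¬ eventA H R x y := fun h => hx1 (by
        rw [V1set, Finset.mem_filter]
        exact ⟨Finset.mem_univ _, y, hxy, h⟩)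
      unfold eventA at this
      simp only [T, if_pos hxy]
      omega
    · simp [T, hxy]
  have hself : ∀ y, H.Adj x y → y ∈ T y := fun y hy => by simp [T, hy, mem_compVerts]
  have hsub : compVerts H c ⊆ insert x ((nbrs G x).biUnion T) := by
    rw [← mem_compVerts.1 hx]
    refine compVerts_subset (fun a ha b hab => ?_) (Finset.mem_insert_self _ _)
    rcases Finset.mem_insert.1 ha with rfl | ha
    · exact Finset.mem_insert_of_mem (Finset.mem_biUnion.2 ⟨b, mem_nbrs.2 (hHG hab), hself b hab⟩)
    · obtain ⟨y, hy, hay⟩ := Finset.mem_biUnion.1 ha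
      have hxy : H.Adj x y := by
        by_contra hxy
        simp [T, hxy] at hay
      by_cases he : s(a, b) = s(x, y)
      · rcases Sym2.eq_iff.1 he with ⟨rfl, rfl⟩ | ⟨rfl, rfl⟩
        · exact Finset.mem_insert_of_mem (Finset.mem_biUnion.2 ⟨b, hy, hself b hxy⟩)
        · exact Finset.mem_insert_self _ _
      · refine Finset.mem_insert_of_mem (Finset.mem_biUnion.2 ⟨y, hy, ?_⟩)
        simp only [T, if_pos hxy] at hay ⊢
        exact mem_compVerts_of_adj hay (by
          rw [SimpleGraph.deleteEdges_adj]
          exact ⟨hab, by simpa using he⟩)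
  have h1 := Finset.card_le_card hsub
  have h2 := Finset.card_insert_le x ((nbrs G x).biUnion T)
  have h3 := Finset.card_biUnion_le_card_mul _ _ _ hT
  rw [hd] at h3
  obtain ⟨r, rfl⟩ := Nat.exists_eq_add_of_le' hR
  rw [Nat.add_sub_cancel] at h3
  rw [mul_add]
  omega

lemma card_compVerts_le_of_notMem_E1set {R : ℕ} {c : H.ConnectedComponent} {e : Sym2 V}
    (he : e ∈ compEdges H c) (he1 : e ∉ E1set H R) : (compVerts H c).card ≤ 2 * R := by
  induction e with
  | _ x y =>
    obtain ⟨hxy, hc⟩ := Finset.mem_filter.1 he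
    have h1 : ¬ (eventA H R x y ∨ eventA H R y x) := fun h =>
      he1 (Finset.mem_filter.2 ⟨hxy, x, y, rfl, h⟩)
    rw [not_or] at h1
    unfold eventA at h1
    rw [Sym2.eq_swap (a := y)] at h1
    set K := H.deleteEdges {s(x, y)}
    have hsub : compVerts H c ⊆ compVerts K (K.connectedComponentMk y) ∪
        compVerts K (K.connectedComponentMk x) := by
      rw [← hc x (by simp)]
      refine compVerts_subset (fun a ha b hab => ?_) (by simp [mem_compVerts])
      by_cases he : s(a, b) = s(x, y)
      · rcases Sym2.eq_iff.1 he with ⟨rfl, rfl⟩ | ⟨rfl, rfl⟩ <;> simp [mem_compVerts]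
      · have hK : K.Adj a b := by
          rw [SimpleGraph.deleteEdges_adj]
          exact ⟨hab, by simpa using he⟩
        rcases Finset.mem_union.1 ha with ha | ha
        · exact Finset.mem_union_left _ (mem_compVerts_of_adj ha hK)
        · exact Finset.mem_union_right _ (mem_compVerts_of_adj ha hK)
    have h2 := Finset.card_le_card hsub
    have h3 := Finset.card_union_le (compVerts K (K.connectedComponentMk y))
      (compVerts K (K.connectedComponentMk x))
    omega

end Components

section Sprinkling

variable {G : SimpleGraph V}

/-- No edge of `P` joins `S` to its complement. -/
def ClosedUnder (P : Finset (Sym2 V)) (S : Finset V) : Prop :=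
  ∀ a b, s(a, b) ∈ P → a ∈ S → b ∈ S

omit [Fintype V] [DecidableEq V] in
lemma ClosedUnder.mono {P Q : Finset (Sym2 V)} {S : Finset V} (h : ClosedUnder Q S)
    (hPQ : P ⊆ Q) : ClosedUnder P S :=
  fun a b hab => h a b (hPQ hab)

lemma ClosedUnder.compl {P : Finset (Sym2 V)} {S : Finset V} (h : ClosedUnder P S) :
    ClosedUnder P Sᶜ := by
  intro a b hab ha
  rw [Finset.mem_compl] at ha ⊢
  exact fun hb => ha (h b a (by rwa [Sym2.eq_swap]) hb)

/-- The vertices joined to `X` by at most `r` edges of `G` outside `F`. -/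
def joinedBall (G : SimpleGraph V) (F : Finset (Sym2 V)) (X : Finset V) (r : ℕ) : Finset V :=
  Finset.univ.filter fun z => ∃ P ⊆ edgeFinset' G \ F, P.card ≤ r ∧
    ∀ S : Finset V, X ⊆ S → ClosedUnder P S → z ∈ S

lemma mem_joinedBall {F : Finset (Sym2 V)} {X : Finset V} {r : ℕ} {z : V} :
    z ∈ joinedBall G F X r ↔ ∃ P ⊆ edgeFinset' G \ F, P.card ≤ r ∧
      ∀ S : Finset V, X ⊆ S → ClosedUnder P S → z ∈ S := by
  simp [joinedBall]

lemma joinedBall_mono (F : Finset (Sym2 V)) (X : Finset V) {r r' : ℕ} (h : r ≤ r') :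
    joinedBall G F X r ⊆ joinedBall G F X r' := by
  intro z hz
  obtain ⟨P, hP, hc, hS⟩ := mem_joinedBall.1 hz
  exact mem_joinedBall.2 ⟨P, hP, hc.trans h, hS⟩

lemma subset_joinedBall (F : Finset (Sym2 V)) (X : Finset V) (r : ℕ) :
    X ⊆ joinedBall G F X r :=
  fun _ hz => mem_joinedBall.2 ⟨∅, by simp, by simp, fun _ hS _ => hS hz⟩

lemma mem_joinedBall_succ {F : Finset (Sym2 V)} {X : Finset V} {r : ℕ} {z w : V}
    (hz : z ∈ joinedBall G F X r) (hzw : G.Adj z w) (hF : s(z, w) ∉ F) :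
    w ∈ joinedBall G F X (r + 1) := by
  obtain ⟨P, hP, hc, hS⟩ := mem_joinedBall.1 hz
  refine mem_joinedBall.2 ⟨insert s(z, w) P, Finset.insert_subset
    (Finset.mem_sdiff.2 ⟨mem_edgeFinset'.2 hzw, hF⟩) hP,
    (Finset.card_insert_le _ _).trans (by omega), fun S hXS hcl => ?_⟩
  exact hcl z w (Finset.mem_insert_self _ _)
    (hS S hXS (hcl.mono (Finset.subset_insert _ _)))

lemma cutCard_joinedBall_le {d : ℕ} (hd : ∀ v, (nbrs G v).card = d) (F : Finset (Sym2 V))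
    (X : Finset V) (r : ℕ) :
    cutCard G (joinedBall G F X r) + d * (joinedBall G F X r).card ≤
      F.card + d * (joinedBall G F X (r + 1)).card := by
  have hsub : (edgeFinset' G).filter (fun e => ∃ x ∈ joinedBall G F X r,
      ∃ y, y ∉ joinedBall G F X r ∧ e = s(x, y)) ⊆
      F ∪ (joinedBall G F X (r + 1) \ joinedBall G F X r).biUnion
        fun y => (nbrs G y).image fun x => s(x, y) := by
    intro e he
    obtain ⟨heG, x, hx, y, hy, rfl⟩ := Finset.mem_filter.1 he
    by_cases hF : s(x, y) ∈ F
    · exact Finset.mem_union_left _ hF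
    · have hxy : G.Adj x y := mem_edgeFinset'.1 heG
      exact Finset.mem_union_right _ (Finset.mem_biUnion.2 ⟨y,
        Finset.mem_sdiff.2 ⟨mem_joinedBall_succ hx hxy hF, hy⟩,
        Finset.mem_image.2 ⟨x, mem_nbrs.2 hxy.symm, rfl⟩⟩)
  have h1 := Finset.card_le_card hsub
  have h2 := Finset.card_union_le F ((joinedBall G F X (r + 1) \ joinedBall G F X r).biUnion
        fun y => (nbrs G y).image fun x => s(x, y))
  have h3 := Finset.card_biUnion_le_card_mul (joinedBall G F X (r + 1) \ joinedBall G F X r)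
    (fun y => (nbrs G y).image fun x => s(x, y)) d
    fun y _ => Finset.card_image_le.trans (hd y).le
  have h4 := Finset.card_sdiff_add_card_eq_card
    (joinedBall_mono (G := G) F X (Nat.le_succ r))
  rw [Nat.succ_eq_add_one] at h4
  rw [← h4, mul_add, mul_comm d (Finset.card (_ \ _))]
  unfold cutCard
  omega

lemma half_lt_card_joinedBall {b τ : ℝ} {d r₀ : ℕ} (hb : 0 < b) (hG : IsExpander G b d)
    (hd : ∀ v, (nbrs G v).card = d) (hr₀ : d < r₀ * (b * τ)) (hn : 0 < Fintype.card V)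
    {F : Finset (Sym2 V)} {X : Finset V} (hX : τ * Fintype.card V ≤ X.card)
    (hF : F.card ≤ b * τ * Fintype.card V / 2) :
    (Fintype.card V : ℝ) / 2 < (joinedBall G F X r₀).card := by
  by_contra! hcon
  have key : ∀ r ≤ r₀, r * (b * τ * Fintype.card V / 2) ≤ d * (joinedBall G F X r).card := by
    intro r
    induction r with
    | zero => intro _; simp; positivity
    | succ r ih =>
      intro hr
      have h1 := ih (by omega)
      have h2 : ((joinedBall G F X r).card : ℝ) ≤ (Fintype.card V : ℝ) / 2 := by
        refine le_trans ?_ hcon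
        exact_mod_cast Finset.card_le_card (joinedBall_mono F X (by omega))
      have h3 := hG.2 _ h2
      have h4 : (cutCard G (joinedBall G F X r) : ℝ) + d * (joinedBall G F X r).card ≤
        F.card + d * (joinedBall G F X (r + 1)).card := by
          exact_mod_cast cutCard_joinedBall_le hd F X r
      have h5 : (X.card : ℝ) ≤ (joinedBall G F X r).card := by
        exact_mod_cast Finset.card_le_card (subset_joinedBall F X r)
      have h6 := mul_le_mul_of_nonneg_left (hX.trans h5) hb.le
      push_cast
      linarith
  have h1 := key r₀ le_rfl
  have h2 := mul_le_mul_of_nonneg_left hcon (Nat.cast_nonneg (α := ℝ) d)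
  have h3 : (0 : ℝ) < Fintype.card V := by exact_mod_cast hn
  nlinarith

/-- In an expander two large sets are joined by few edges, avoiding a small set of edges. -/
lemma exists_connecting {b τ : ℝ} {d r₀ : ℕ} (hb : 0 < b) (hG : IsExpander G b d)
    (hd : ∀ v, (nbrs G v).card = d) (hr₀ : d < r₀ * (b * τ)) (hn : 0 < Fintype.card V)
    {F : Finset (Sym2 V)} {X Y : Finset V} (hX : τ * Fintype.card V ≤ X.card)
    (hY : τ * Fintype.card V ≤ Y.card) (hF : F.card ≤ b * τ * Fintype.card V / 2) :
    ∃ P ⊆ edgeFinset' G \ F, P.card ≤ 2 * r₀ ∧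
      ∀ S : Finset V, X ⊆ S → ClosedUnder P S → ¬ Disjoint Y S := by
  have h1 := half_lt_card_joinedBall hb hG hd hr₀ hn hX hF
  have h2 := half_lt_card_joinedBall hb hG hd hr₀ hn hY hF
  have h3 : ¬ Disjoint (joinedBall G F X r₀) (joinedBall G F Y r₀) := by
    intro hdis
    have := Finset.card_le_univ (joinedBall G F X r₀ ∪ joinedBall G F Y r₀)
    rw [Finset.card_union_of_disjoint hdis] at this
    have : ((joinedBall G F X r₀).card : ℝ) + (joinedBall G F Y r₀).card ≤ Fintype.card V := by
      exact_mod_cast this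
    linarith
  obtain ⟨z, hzX, hzY⟩ := Finset.not_disjoint_iff.1 h3
  obtain ⟨P, hP, hPc, hPS⟩ := mem_joinedBall.1 hzX
  obtain ⟨Q, hQ, hQc, hQS⟩ := mem_joinedBall.1 hzY
  refine ⟨P ∪ Q, Finset.union_subset hP hQ, (Finset.card_union_le _ _).trans (by omega),
    fun S hXS hcl hdis => ?_⟩
  have hz1 := hPS S hXS (hcl.mono Finset.subset_union_left)
  have hz2 := hQS Sᶜ (fun y hy => Finset.mem_compl.2 (Finset.disjoint_left.1 hdis hy))
    (hcl.mono Finset.subset_union_right).compl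
  exact Finset.mem_compl.1 hz2 hz1

lemma exists_disjoint_connecting {b τ : ℝ} {d r₀ : ℕ} (hb : 0 < b) (hG : IsExpander G b d)
    (hd : ∀ v, (nbrs G v).card = d) (hr₀ : d < r₀ * (b * τ)) (hn : 0 < Fintype.card V)
    {X Y : Finset V} (hX : τ * Fintype.card V ≤ X.card) (hY : τ * Fintype.card V ≤ Y.card)
    (m : ℕ) (hm : (m * (2 * r₀) : ℝ) ≤ b * τ * Fintype.card V / 2) :
    ∃ f : ℕ → Finset (Sym2 V), (∀ i < m, f i ⊆ edgeFinset' G ∧ (f i).card ≤ 2 * r₀ ∧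
      ∀ S : Finset V, X ⊆ S → ClosedUnder (f i) S → ¬ Disjoint Y S) ∧
      ∀ i < m, ∀ j < m, i ≠ j → Disjoint (f i) (f j) := by
  induction m with
  | zero => exact ⟨fun _ => ∅, by simp, by simp⟩
  | succ m ih =>
    have hr : (0 : ℝ) ≤ 2 * r₀ := by positivity
    push_cast at hm
    obtain ⟨f, hf, hdis⟩ := ih (by linarith)
    have hF : (((Finset.range m).biUnion f).card : ℝ) ≤ b * τ * Fintype.card V / 2 := by
      have := Finset.card_biUnion_le_card_mul (Finset.range m) f (2 * r₀)
        fun i hi => (hf i (Finset.mem_range.1 hi)).2.1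
      rw [Finset.card_range] at this
      have : (((Finset.range m).biUnion f).card : ℝ) ≤ m * (2 * r₀) := by exact_mod_cast this
      linarith
    obtain ⟨P, hP, hPc, hPS⟩ := exists_connecting hb hG hd hr₀ hn hX hY hF
    have hPf : ∀ i < m, Disjoint (f i) P := by
      intro i hi
      rw [Finset.disjoint_right]
      intro e he hei
      exact (Finset.mem_sdiff.1 (hP he)).2
        (Finset.mem_biUnion.2 ⟨i, Finset.mem_range.2 hi, hei⟩)
    refine ⟨Function.update f m P, fun i hi => ?_, fun i hi j hj hij => ?_⟩
    · rcases Nat.lt_succ_iff_lt_or_eq.1 hi with hi | rfl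
      · rw [Function.update_of_ne hi.ne]
        exact hf i hi
      · rw [Function.update_self]
        exact ⟨hP.trans Finset.sdiff_subset, hPc, hPS⟩
    · rcases Nat.lt_succ_iff_lt_or_eq.1 hi with hi | rfl <;>
        rcases Nat.lt_succ_iff_lt_or_eq.1 hj with hj | rfl
      · rw [Function.update_of_ne hi.ne, Function.update_of_ne hj.ne]
        exact hdis i hi j hj hij
      · rw [Function.update_of_ne hi.ne, Function.update_self]
        exact hPf i hi
      · rw [Function.update_of_ne hj.ne, Function.update_self]
        exact (hPf j hj).symm
      · exact absurd rfl hij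

/-- Percolation on an expander connects two given large sets. -/
lemma percExp_separated_le {b τ p : ℝ} {d r₀ : ℕ} (hb : 0 < b) (hτ : 0 < τ) (hp : 0 ≤ p)
    (hp1 : p ≤ 1) (hG : IsExpander G b d)
    (hd : ∀ v, (nbrs G v).card = d) (hr₀ : d < r₀ * (b * τ)) (hn : 0 < Fintype.card V)
    {X Y : Finset V} (hX : τ * Fintype.card V ≤ X.card) (hY : τ * Fintype.card V ≤ Y.card) :
    percExp p (edgeFinset' G) (fun t => if ∃ S : Finset V, X ⊆ S ∧ Disjoint Y S ∧
      ClosedUnder t S then 1 else 0) ≤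
      Real.exp (1 - p ^ (2 * r₀) * (b * τ / (4 * r₀)) * Fintype.card V) := by
  have hr0 : 0 < r₀ := by
    rcases Nat.eq_zero_or_pos r₀ with rfl | h
    · simp at hr₀
      exact absurd hr₀ (not_lt.2 (Nat.cast_nonneg d))
    · exact h
  have hr0' : (0 : ℝ) < r₀ := by exact_mod_cast hr0
  set x : ℝ := b * τ / (4 * r₀) * Fintype.card V with hx
  have hx0 : 0 ≤ x := by positivity
  have hm1 := Nat.floor_le hx0
  have hm2 := (Nat.lt_floor_add_one x).le
  obtain ⟨f, hf, hdis⟩ := exists_disjoint_connecting hb hG hd hr₀ hn hX hY ⌊x⌋₊ (by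
    calc (⌊x⌋₊ * (2 * r₀) : ℝ) ≤ x * (2 * r₀) := by gcongr
      _ = _ := by rw [hx]; field_simp; ring)
  have h1 : percExp p (edgeFinset' G) (fun t => if ∃ S : Finset V, X ⊆ S ∧ Disjoint Y S ∧
      ClosedUnder t S then 1 else 0) ≤
      percExp p (edgeFinset' G) (fun t => if ∀ i < ⌊x⌋₊, ¬ f i ⊆ t then 1 else 0) := by
    refine percExp_mono hp hp1 fun t _ => ?_
    split_ifs with h1 h2 h2
    · exact le_rfl
    · exfalso
      obtain ⟨S, hXS, hYS, hcl⟩ := h1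
      refine h2 fun i hi hsub => (hf i hi).2.2 S hXS (hcl.mono hsub) hYS
    · exact zero_le_one
    · exact le_rfl
  refine h1.trans ((percExp_forall_not_subset_le hp hp1 f (fun i hi => (hf i hi).1)
    (fun i hi => (hf i hi).2.1) hdis).trans ?_)
  have hq0 : 0 ≤ p ^ (2 * r₀) := by positivity
  have hq1 : p ^ (2 * r₀) ≤ 1 := pow_le_one₀ hp hp1
  have h2 : 1 - p ^ (2 * r₀) ≤ Real.exp (-p ^ (2 * r₀)) := by
    have := Real.add_one_le_exp (-p ^ (2 * r₀))
    linarith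
  refine (pow_le_pow_left₀ (by linarith) h2 _).trans ?_
  rw [← Real.exp_nat_mul]
  refine Real.exp_le_exp.2 ?_
  rw [mul_assoc, ← hx]
  nlinarith

/-- The vertices in components of `fromEdgeSet s` with more than `k` vertices. -/
def bigVerts (s : Finset (Sym2 V)) (k : ℕ) : Finset V :=
  Finset.univ.filter fun v => k < (compVerts (SimpleGraph.fromEdgeSet (s : Set (Sym2 V)))
    ((SimpleGraph.fromEdgeSet (s : Set (Sym2 V))).connectedComponentMk v)).card

omit [DecidableEq V] in
lemma closedUnder_compVerts {s : Finset (Sym2 V)}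
    (c : (SimpleGraph.fromEdgeSet (s : Set (Sym2 V))).ConnectedComponent) :
    ClosedUnder s (compVerts (SimpleGraph.fromEdgeSet (s : Set (Sym2 V))) c) := by
  intro a b hab ha
  by_cases h : a = b
  · exact h ▸ ha
  · exact mem_compVerts_of_adj ha ((SimpleGraph.fromEdgeSet_adj _).2 ⟨by simpa using hab, h⟩)

omit [DecidableEq V] in
lemma compVerts_subset_of_closedUnder {s : Finset (Sym2 V)} {S : Finset V}
    (hS : ClosedUnder s S) {v : V} (hv : v ∈ S) :
    compVerts (SimpleGraph.fromEdgeSet (s : Set (Sym2 V)))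
      ((SimpleGraph.fromEdgeSet (s : Set (Sym2 V))).connectedComponentMk v) ⊆ S :=
  compVerts_subset (fun a ha b hab =>
    hS a b (by simpa using ((SimpleGraph.fromEdgeSet_adj _).1 hab).1) ha) hv

/-- After sprinkling, no set of components splits the big components evenly. -/
lemma percExp_split_le {b τ p : ℝ} {d r₀ : ℕ} (hb : 0 < b) (hτ : 0 < τ) (hp : 0 ≤ p)
    (hp1 : p ≤ 1) (hG : IsExpander G b d)
    (hd : ∀ v, (nbrs G v).card = d) (hr₀ : d < r₀ * (b * τ)) (hn : 0 < Fintype.card V)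
    {k : ℕ} (hk : 2 ≤ p ^ (2 * r₀) * (b * τ / (4 * r₀)) * k) (s : Finset (Sym2 V)) :
    percExp p (edgeFinset' G) (fun t => if ∃ S : Finset V, ClosedUnder (s ∪ t) S ∧
      τ * Fintype.card V ≤ (bigVerts s k ∩ S).card ∧
      τ * Fintype.card V ≤ (bigVerts s k \ S).card then 1 else 0) ≤
      Real.exp (1 - p ^ (2 * r₀) * (b * τ / (4 * r₀)) / 2 * Fintype.card V) := by
  set c : ℝ := p ^ (2 * r₀) * (b * τ / (4 * r₀)) with hc
  set K : V → Finset V := fun v => compVerts (SimpleGraph.fromEdgeSet (s : Set (Sym2 V)))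
    ((SimpleGraph.fromEdgeSet (s : Set (Sym2 V))).connectedComponentMk v) with hK
  have hKself : ∀ v, v ∈ K v := fun v => by simp [hK, mem_compVerts]
  have hKeq : ∀ v, ∀ a ∈ K v, K a = K v := by
    intro v a ha
    simp only [hK] at ha ⊢
    rw [mem_compVerts.1 ha]
  set B := (bigVerts s k).image K with hB
  have hBcard : B.card * k ≤ Fintype.card V := by
    have hdis : ∀ T ∈ B, ∀ T' ∈ B, T ≠ T' → Disjoint (id T) (id T') := by
      intro T hT T' hT' hne
      obtain ⟨v, -, rfl⟩ := Finset.mem_image.1 hT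
      obtain ⟨v', -, rfl⟩ := Finset.mem_image.1 hT'
      rw [Finset.disjoint_left]
      exact fun a ha ha' => hne ((hKeq v a ha).symm.trans (hKeq v' a ha'))
    have h1 := Finset.card_biUnion hdis
    have h2 : B.card * k ≤ ∑ T ∈ B, (id T).card := by
      rw [← smul_eq_mul]
      refine Finset.card_nsmul_le_sum _ _ _ fun T hT => ?_
      obtain ⟨v, hv, rfl⟩ := Finset.mem_image.1 hT
      exact (Finset.mem_filter.1 hv).2.le
    have h3 := Finset.card_le_univ (B.biUnion id)
    omega
  have hle : percExp p (edgeFinset' G) (fun t => if ∃ S : Finset V, ClosedUnder (s ∪ t) S ∧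
      τ * Fintype.card V ≤ (bigVerts s k ∩ S).card ∧
      τ * Fintype.card V ≤ (bigVerts s k \ S).card then 1 else 0) ≤
      percExp p (edgeFinset' G) (fun t => ∑ A ∈ B.powerset,
        if (τ * Fintype.card V ≤ (A.biUnion id).card ∧
          τ * Fintype.card V ≤ ((B \ A).biUnion id).card) ∧ ∃ S : Finset V, A.biUnion id ⊆ S ∧
            Disjoint ((B \ A).biUnion id) S ∧ ClosedUnder t S then 1 else 0) := by
    refine percExp_mono hp hp1 fun t _ => ?_
    split_ifs with h
    · obtain ⟨S, hcl, hS1, hS2⟩ := h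
      have hcls := hcl.mono (Finset.subset_union_left (s₁ := s) (s₂ := t))
      have hKS : ∀ v ∈ S, K v ⊆ S := fun v hv => compVerts_subset_of_closedUnder hcls hv
      have hmem : B.filter (· ⊆ S) ∈ B.powerset :=
        Finset.mem_powerset.2 (Finset.filter_subset _ _)
      refine le_trans (le_of_eq ?_) (Finset.single_le_sum (fun A _ => ?_) hmem)
      · refine (if_pos ⟨⟨hS1.trans ?_, hS2.trans ?_⟩, S, ?_, ?_,
          hcl.mono Finset.subset_union_right⟩).symm
        · refine Nat.cast_le.2 (Finset.card_le_card fun v hv => ?_)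
          obtain ⟨hv, hvS⟩ := Finset.mem_inter.1 hv
          exact Finset.mem_biUnion.2 ⟨K v, Finset.mem_filter.2
            ⟨Finset.mem_image_of_mem K hv, hKS v hvS⟩, hKself v⟩
        · refine Nat.cast_le.2 (Finset.card_le_card fun v hv => ?_)
          obtain ⟨hv, hvS⟩ := Finset.mem_sdiff.1 hv
          exact Finset.mem_biUnion.2 ⟨K v, Finset.mem_sdiff.2 ⟨Finset.mem_image_of_mem K hv,
            fun h => hvS ((Finset.mem_filter.1 h).2 (hKself v))⟩, hKself v⟩
        · exact Finset.biUnion_subset.2 fun T hT => (Finset.mem_filter.1 hT).2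
        · rw [Finset.disjoint_biUnion_left]
          intro T hT
          obtain ⟨hT, hTA⟩ := Finset.mem_sdiff.1 hT
          obtain ⟨v, hv, rfl⟩ := Finset.mem_image.1 hT
          rw [Finset.disjoint_left]
          intro a ha haS
          refine hTA (Finset.mem_filter.2 ⟨hT, ?_⟩)
          rw [← hKeq v a ha]
          exact hKS a haS
      · split_ifs <;> simp
    · exact Finset.sum_nonneg fun A _ => by split_ifs <;> simp
  rw [percExp_sum] at hle
  have hterm : ∀ A ∈ B.powerset, percExp p (edgeFinset' G) (fun t =>
      if (τ * Fintype.card V ≤ (A.biUnion id).card ∧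
          τ * Fintype.card V ≤ ((B \ A).biUnion id).card) ∧ ∃ S : Finset V, A.biUnion id ⊆ S ∧
            Disjoint ((B \ A).biUnion id) S ∧ ClosedUnder t S then 1 else 0) ≤
      Real.exp (1 - c * Fintype.card V) := by
    intro A _
    by_cases h : τ * Fintype.card V ≤ (A.biUnion id).card ∧
          τ * Fintype.card V ≤ ((B \ A).biUnion id).card
    · simp only [h, true_and, and_self]
      exact percExp_separated_le hb hτ hp hp1 hG hd hr₀ hn h.1 h.2
    · simp only [h, false_and, if_false, percExp_const]
      exact (Real.exp_pos _).le
  refine hle.trans ((Finset.sum_le_sum hterm).trans ?_)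
  rw [Finset.sum_const, Finset.card_powerset, nsmul_eq_mul]
  have h2 : ((2 ^ B.card : ℕ) : ℝ) ≤ Real.exp B.card := by
    push_cast
    have : (2 : ℝ) ≤ Real.exp 1 := by linarith [Real.add_one_le_exp (1 : ℝ)]
    calc (2 : ℝ) ^ B.card ≤ Real.exp 1 ^ B.card := pow_le_pow_left₀ (by norm_num) this _
      _ = _ := by rw [← Real.exp_nat_mul, mul_one]
  refine (mul_le_mul_of_nonneg_right h2 (Real.exp_pos _).le).trans ?_
  rw [← Real.exp_add]
  refine Real.exp_le_exp.2 ?_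
  have h3 : (B.card * k : ℝ) ≤ Fintype.card V := by exact_mod_cast hBcard
  have hc0 : 0 ≤ c := by positivity
  have h4 : (B.card : ℝ) * 2 ≤ c * Fintype.card V := by
    calc (B.card : ℝ) * 2 ≤ B.card * (c * k) := by gcongr
      _ = c * (B.card * k) := by ring
      _ ≤ _ := by gcongr
  linarith

end Sprinkling

section Survival

open Filter Topology

lemma survival_mem_Icc {p : ℝ} (hp : 0 ≤ p) (hp1 : p ≤ 1) (m k : ℕ) :
    survival p m k ∈ Set.Icc (0 : ℝ) 1 := by
  induction k with
  | zero => simp [survival]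
  | succ k ih =>
    have h0 : 0 ≤ 1 - p * survival p m k := by nlinarith [ih.1, ih.2]
    have h1 : 1 - p * survival p m k ≤ 1 := by nlinarith [ih.1, ih.2]
    have := pow_nonneg h0 m
    have := pow_le_one₀ (n := m) h0 h1
    simp only [survival, Set.mem_Icc]
    constructor <;> linarith

lemma survival_antitone {p : ℝ} (hp : 0 ≤ p) (hp1 : p ≤ 1) (m : ℕ) :
    Antitone (survival p m) := by
  refine antitone_nat_of_succ_le fun k => ?_
  induction k with
  | zero => exact (survival_mem_Icc hp hp1 m 1).2
  | succ k ih =>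
    have h := survival_mem_Icc hp hp1 m k
    rw [survival.eq_def p m (k + 1 + 1), survival.eq_def p m (k + 1)]
    dsimp only
    have h0 : 0 ≤ 1 - p * survival p m k := by nlinarith [h.1, h.2]
    gcongr

lemma lt_of_fixed_point {p q x : ℝ} {m : ℕ} (hm : 2 ≤ m) (hp : 0 < p) (hp1 : p ≤ 1) (hx : 0 < x)
    (hxq : x < q) (hq1 : q ≤ 1) (hq : q = 1 - (1 - p * q) ^ m) : x < 1 - (1 - p * x) ^ m := by
  have hq0 : 0 < q := hx.trans hxq
  have h0 : 1 - p * q ∈ Set.Ici (0 : ℝ) := Set.mem_Ici.2 (by nlinarith)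
  have hne : (1 : ℝ) ≠ 1 - p * q := by nlinarith
  have hlt : 0 < 1 - x / q := by rw [sub_pos, div_lt_one hq0]; exact hxq
  have h := (strictConvexOn_pow hm).2 (Set.mem_Ici.2 zero_le_one) h0 hne hlt
    (div_pos hx hq0) (by ring)
  simp only [smul_eq_mul, one_pow] at h
  have h1 : (1 - x / q) * 1 + x / q * (1 - p * q) = 1 - p * x := by field_simp; ring
  have h2 : (1 - x / q) * 1 + x / q * (1 - p * q) ^ m = 1 - x := by
    rw [show (1 - p * q) ^ m = 1 - q by linarith]; field_simp; ring
  rw [h1, h2] at h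
  linarith

lemma exists_le_survival {p q x : ℝ} {m : ℕ} (hm : 2 ≤ m) (hp : 0 < p) (hp1 : p ≤ 1) (hx : 0 < x)
    (hxq : x < q) (hq1 : q ≤ 1) (hq : q = 1 - (1 - p * q) ^ m) :
    ∃ p₁, 0 ≤ p₁ ∧ p₁ < p ∧ ∀ k, x ≤ survival p₁ m k := by
  have hc : Continuous fun r : ℝ => 1 - (1 - r * x) ^ m := by fun_prop
  have h1 : ∀ᶠ r in 𝓝[<] p, x < 1 - (1 - r * x) ^ m :=
    (hc.tendsto p).mono_left nhdsWithin_le_nhds |>.eventually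
      (lt_mem_nhds (lt_of_fixed_point hm hp hp1 hx hxq hq1 hq))
  have h2 : ∀ᶠ r in 𝓝[<] p, 0 < r := nhdsWithin_le_nhds (lt_mem_nhds hp)
  obtain ⟨r, h1, h2, h3⟩ := (h1.and (h2.and self_mem_nhdsWithin)).exists
  have h3 : r < p := h3
  refine ⟨r, h2.le, h3, fun k => ?_⟩
  induction k with
  | zero => exact (hxq.trans_le hq1).le
  | succ k ih =>
    have h := survival_mem_Icc h2.le (h3.le.trans hp1) m k
    have h0 : 0 ≤ 1 - r * survival r m k := by nlinarith [h.1, h.2]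
    rw [survival]
    refine h1.le.trans ?_
    gcongr

/-- Survival probabilities are left continuous in the percolation parameter, uniformly over
large depths. -/
lemma exists_survival_sub_le {p : ℝ} {m : ℕ} (hm : 2 ≤ m) (hp : 0 < p) (hp1 : p ≤ 1) {δ : ℝ}
    (hδ : 0 < δ) : ∃ p₁, 0 ≤ p₁ ∧ p₁ < p ∧ ∃ k₀, ∀ k ≥ k₀,
      survival p m k - survival p₁ m k ≤ δ := by
  have hI := survival_mem_Icc hp.le hp1 m
  obtain ⟨q, hlim⟩ : ∃ q, Tendsto (survival p m) atTop (𝓝 q) :=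
    ⟨_, tendsto_atTop_ciInf (survival_antitone hp.le hp1 m)
      ⟨0, by rintro _ ⟨k, rfl⟩; exact (hI k).1⟩⟩
  have hq1 : q ≤ 1 := le_of_tendsto' hlim fun k => (hI k).2
  have hq : q = 1 - (1 - p * q) ^ m := by
    refine tendsto_nhds_unique (hlim.comp (tendsto_add_atTop_nat 1)) ?_
    have hc : Continuous fun r : ℝ => 1 - (1 - p * r) ^ m := by fun_prop
    exact (hc.tendsto q).comp hlim
  obtain ⟨p₁, h0, h1, hx⟩ : ∃ p₁, 0 ≤ p₁ ∧ p₁ < p ∧ ∀ k, q - δ / 2 ≤ survival p₁ m k := by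
    by_cases hqδ : q - δ / 2 ≤ 0
    · exact ⟨0, le_rfl, hp, fun k => hqδ.trans (survival_mem_Icc le_rfl zero_le_one m k).1⟩
    · exact exists_le_survival hm hp hp1 (not_le.1 hqδ) (by linarith) hq1 hq
  obtain ⟨k₀, hk₀⟩ := eventually_atTop.1
    (hlim.eventually (gt_mem_nhds (show q < q + δ / 2 by linarith)))
  exact ⟨p₁, h0, h1, k₀, fun k hk => by linarith [hk₀ k hk, hx k]⟩

end Survival

section LargestComponent

variable {G : SimpleGraph V}

/-- The pairs `(x, y)` with a long branch at `y` in `u` but not in `s`, together with those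
for which `y` lies in `U` and in a big component of `s`. -/
def branchDarts (G : SimpleGraph V) (s u : Finset (Sym2 V)) (k : ℕ) (U : Finset V) :
    Finset (V × V) :=
  ((dartPairs G).filter fun x => LongBranch G u k x.1 x.2 ∧ ¬ LongBranch G s k x.1 x.2) ∪
    (bigVerts s k ∩ U).biUnion fun y => (nbrs G y).image fun x => (x, y)

lemma card_branchDarts_le {d k : ℕ} (hd : ∀ v, (nbrs G v).card = d) {s u : Finset (Sym2 V)}
    (hsu : s ⊆ u) (U : Finset V) :
    ((branchDarts G s u k U).card : ℝ) ≤
      (numLong G k u - numLong G k s) + d * (bigVerts s k ∩ U).card := by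
  have h1 : (((dartPairs G).filter fun x => LongBranch G u k x.1 x.2 ∧
      ¬ LongBranch G s k x.1 x.2).card : ℝ) = numLong G k u - numLong G k s := by
    rw [numLong, numLong, ← Finset.sum_sub_distrib, Finset.card_filter, Nat.cast_sum]
    refine Finset.sum_congr rfl fun x _ => ?_
    by_cases hs : LongBranch G s k x.1 x.2
    · simp [hs, hs.mono hsu]
    · simp [hs]
  have h2 : ((bigVerts s k ∩ U).biUnion fun y => (nbrs G y).image fun x => (x, y)).card ≤
      (bigVerts s k ∩ U).card * d :=
    Finset.card_biUnion_le_card_mul _ _ _ fun y _ => Finset.card_image_le.trans (hd y).le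
  have h3 : ((branchDarts G s u k U).card : ℝ) ≤ _ :=
    Nat.cast_le.2 ((Finset.card_union_le _ _).trans (Nat.add_le_add_left h2 _))
  push_cast at h3
  linarith

lemma mem_branchDarts_of_eventA {d k R : ℕ} (hd : ∀ v, (nbrs G v).card = d)
    {s u : Finset (Sym2 V)} (hu : u ⊆ edgeFinset' G) (hk : k < G.girth) (hR : branchSize d k < R)
    {U : Finset V} {x y : V} (hxy : G.Adj x y) (hy : y ∈ U)
    (h : eventA (SimpleGraph.fromEdgeSet (u : Set (Sym2 V))) R x y) :
    (x, y) ∈ branchDarts G s u k U := by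
  have hl := longBranch_of_eventA hd hu hR h
  by_cases hs : LongBranch G s k x y
  · exact Finset.mem_union_right _ (Finset.mem_biUnion.2 ⟨y, Finset.mem_inter.2
      ⟨Finset.mem_filter.2 ⟨Finset.mem_univ _, lt_card_compVerts_of_longBranch hk hs⟩, hy⟩,
      Finset.mem_image_of_mem _ (mem_nbrs.2 hxy.symm)⟩)
  · exact Finset.mem_union_left _ (Finset.mem_filter.2 ⟨mem_dartPairs.2 hxy, hl, hs⟩)

omit [DecidableEq V] in
lemma adj_of_adj_fromEdgeSet {u : Finset (Sym2 V)} (hu : u ⊆ edgeFinset' G) {x y : V}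
    (h : (SimpleGraph.fromEdgeSet (u : Set (Sym2 V))).Adj x y) : G.Adj x y ∧ s(x, y) ∈ u := by
  have h1 : s(x, y) ∈ u := by simpa using ((SimpleGraph.fromEdgeSet_adj _).1 h).1
  exact ⟨mem_edgeFinset'.1 (hu h1), h1⟩

omit [DecidableEq V] in
lemma mem_V1set {H : SimpleGraph V} {R : ℕ} {x : V} :
    x ∈ V1set H R ↔ ∃ y, H.Adj x y ∧ eventA H R x y := by simp [V1set]

lemma card_V1set_inter_le {d k R : ℕ} (hd : ∀ v, (nbrs G v).card = d)
    {s u : Finset (Sym2 V)} (hu : u ⊆ edgeFinset' G) (hk : k < G.girth) (hR : branchSize d k < R)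
    {U : Finset V} (hU : ClosedUnder u U) :
    (V1set (SimpleGraph.fromEdgeSet (u : Set (Sym2 V))) R ∩ U).card ≤
      (branchDarts G s u k U).card := by
  refine (Finset.card_le_card (t := (branchDarts G s u k U).image Prod.fst)
    fun x hx => ?_).trans Finset.card_image_le
  obtain ⟨hx, hxU⟩ := Finset.mem_inter.1 hx
  obtain ⟨y, hxy, h⟩ := mem_V1set.1 hx
  obtain ⟨hG, hmem⟩ := adj_of_adj_fromEdgeSet hu hxy
  exact Finset.mem_image.2 ⟨(x, y),
    mem_branchDarts_of_eventA hd hu hk hR hG (hU x y hmem hxU) h, rfl⟩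

lemma card_E1set_sdiff_le {d k R : ℕ} (hd : ∀ v, (nbrs G v).card = d)
    {s u : Finset (Sym2 V)} (hu : u ⊆ edgeFinset' G) (hk : k < G.girth) (hR : branchSize d k < R)
    (c : (SimpleGraph.fromEdgeSet (u : Set (Sym2 V))).ConnectedComponent) :
    (E1set (SimpleGraph.fromEdgeSet (u : Set (Sym2 V))) R \
      compEdges (SimpleGraph.fromEdgeSet (u : Set (Sym2 V))) c).card ≤
      (branchDarts G s u k (compVerts (SimpleGraph.fromEdgeSet (u : Set (Sym2 V))) c)ᶜ).card := by
  refine (Finset.card_le_card (t := (branchDarts G s u k _).image fun x => s(x.1, x.2))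
    fun e he => ?_).trans Finset.card_image_le
  obtain ⟨he, hec⟩ := Finset.mem_sdiff.1 he
  obtain ⟨heH, x, y, rfl, h⟩ := Finset.mem_filter.1 he
  have hxy := mem_edgeFinset'.1 heH
  obtain ⟨hG, -⟩ := adj_of_adj_fromEdgeSet hu hxy
  have hcl : ∀ a b, (SimpleGraph.fromEdgeSet (u : Set (Sym2 V))).Adj a b → s(x, y) = s(a, b) →
      b ∈ (compVerts (SimpleGraph.fromEdgeSet (u : Set (Sym2 V))) c)ᶜ := by
    intro a b hab hs
    rw [Finset.mem_compl]
    refine fun hb => hec (Finset.mem_filter.2 ⟨heH, fun v hv => mem_compVerts.1 ?_⟩)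
    rw [hs, Sym2.mem_iff] at hv
    rcases hv with rfl | rfl
    · exact mem_compVerts_of_adj hb hab.symm
    · exact hb
  rcases h with h | h
  · exact Finset.mem_image.2 ⟨(x, y),
      mem_branchDarts_of_eventA hd hu hk hR hG (hcl x y hxy rfl) h, rfl⟩
  · exact Finset.mem_image.2 ⟨(y, x),
      mem_branchDarts_of_eventA hd hu hk hR hG.symm (hcl y x hxy.symm Sym2.eq_swap) h,
        Sym2.eq_swap⟩

lemma card_compEdges_le {d : ℕ} (hd : ∀ v, (nbrs G v).card = d) {H : SimpleGraph V}
    (hHG : H ≤ G) (c : H.ConnectedComponent) :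
    (compEdges H c).card ≤ (compVerts H c).card * d := by
  refine (Finset.card_le_card (t := (compVerts H c).biUnion fun x =>
    (nbrs G x).image fun y => s(x, y)) fun e he => ?_).trans
    (Finset.card_biUnion_le_card_mul _ _ _ fun y _ => Finset.card_image_le.trans (hd y).le)
  induction e with
  | _ x y =>
    obtain ⟨hxy, hc⟩ := Finset.mem_filter.1 he
    exact Finset.mem_biUnion.2 ⟨x, mem_compVerts.2 (hc x (by simp)),
      Finset.mem_image_of_mem _ (mem_nbrs.2 (hHG (mem_edgeFinset'.1 hxy)))⟩

/-- If all components have size at most `M` and no union of components splits `W` evenly, then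
`W` is small. -/
lemma card_lt_of_not_split {u : Finset (Sym2 V)} {W : Finset V} {τ M : ℝ} (hτ : 0 < τ)
    (hM : 0 ≤ M)
    (hc : ∀ c, ((compVerts (SimpleGraph.fromEdgeSet (u : Set (Sym2 V))) c).card : ℝ) ≤ M)
    (h : ¬ ∃ S : Finset V, ClosedUnder u S ∧ τ ≤ (W ∩ S).card ∧ τ ≤ (W \ S).card) :
    (W.card : ℝ) < M + 2 * τ := by
  by_contra! hW
  have hne : (Finset.univ.filter fun S : Finset V => ClosedUnder u S ∧
      τ ≤ (W ∩ S).card).Nonempty :=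
    ⟨Finset.univ, Finset.mem_filter.2 ⟨Finset.mem_univ _, fun _ _ _ _ => Finset.mem_univ _, by
      rw [Finset.inter_univ]; linarith⟩⟩
  obtain ⟨S, hS, hmin⟩ := Finset.exists_min_image _ Finset.card hne
  obtain ⟨-, hcl, hSτ⟩ := Finset.mem_filter.1 hS
  obtain ⟨v, hv⟩ : (W ∩ S).Nonempty := by
    rw [← Finset.card_pos]
    exact_mod_cast hτ.trans_le hSτ
  have hvS := (Finset.mem_inter.1 hv).2
  set K := compVerts (SimpleGraph.fromEdgeSet (u : Set (Sym2 V)))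
    ((SimpleGraph.fromEdgeSet (u : Set (Sym2 V))).connectedComponentMk v) with hK
  have hKcl : ClosedUnder u Kᶜ := (closedUnder_compVerts _).compl
  have hlt : (S \ K).card < S.card := Finset.card_lt_card
    ⟨Finset.sdiff_subset, fun hsub => (Finset.mem_sdiff.1 (hsub hvS)).2 (mem_compVerts.2 rfl)⟩
  have hcl' : ClosedUnder u (S \ K) := fun a b hab ha => by
    obtain ⟨ha, haK⟩ := Finset.mem_sdiff.1 ha
    exact Finset.mem_sdiff.2 ⟨hcl a b hab ha,
      Finset.mem_compl.1 (hKcl a b hab (Finset.mem_compl.2 haK))⟩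
  have hsmall : ((W ∩ (S \ K)).card : ℝ) < τ := by
    by_contra! hge
    have := hmin _ (Finset.mem_filter.2 ⟨Finset.mem_univ _, hcl', hge⟩)
    omega
  have hle : (W ∩ S).card ≤ (W ∩ (S \ K)).card + K.card := by
    refine (Finset.card_le_card fun a ha => ?_).trans (Finset.card_union_le _ _)
    simp only [Finset.mem_inter, Finset.mem_union, Finset.mem_sdiff] at ha ⊢
    tauto
  have hle' : ((W ∩ S).card : ℝ) ≤ (W ∩ (S \ K)).card + K.card := by exact_mod_cast hle
  have hsum : ((W \ S).card : ℝ) + (W ∩ S).card = W.card := by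
    exact_mod_cast Finset.card_sdiff_add_card_inter W S
  exact h ⟨S, hcl, hSτ, by
    linarith [hc ((SimpleGraph.fromEdgeSet (u : Set (Sym2 V))).connectedComponentMk v)]⟩

lemma card_bigVerts_sdiff_le {d k R : ℕ} (hd1 : 1 ≤ d) (hd : ∀ v, (nbrs G v).card = d)
    {s u : Finset (Sym2 V)} (hsu : s ⊆ u) (hu : u ⊆ edgeFinset' G) (hk : k < G.girth)
    (hR : branchSize d k < R) {c : (SimpleGraph.fromEdgeSet (u : Set (Sym2 V))).ConnectedComponent}
    (hc : IsLargestComp _ c) {β τ : ℝ} (hτ : 0 < τ) (hβ : numLong G k u - numLong G k s ≤ β)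
    (hsplit : ¬ ∃ S : Finset V, ClosedUnder u S ∧ τ ≤ (bigVerts s k ∩ S).card ∧
      τ ≤ (bigVerts s k \ S).card) :
    ((bigVerts s k \ compVerts (SimpleGraph.fromEdgeSet (u : Set (Sym2 V))) c).card : ℝ) ≤
      β + d * τ + d * R + 2 * τ := by
  have hHG : SimpleGraph.fromEdgeSet (u : Set (Sym2 V)) ≤ G :=
    fun a b hab => (adj_of_adj_fromEdgeSet hu hab).1
  have hβ0 : 0 ≤ β := by
    have h1 := card_branchDarts_le (k := k) hd hsu ∅
    have h2 : (0 : ℝ) ≤ (branchDarts G s u k ∅).card := by positivity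
    simp only [Finset.inter_empty, Finset.card_empty] at h1
    push_cast at h1
    linarith
  have hdτ : 0 ≤ d * τ := by positivity
  have hdR : (0 : ℝ) ≤ d * R := by positivity
  set C := compVerts (SimpleGraph.fromEdgeSet (u : Set (Sym2 V))) c with hC
  by_cases h1 : τ ≤ (bigVerts s k \ C).card
  · have h2 : ((bigVerts s k ∩ C).card : ℝ) < τ := by
      by_contra! h2
      exact hsplit ⟨C, closedUnder_compVerts c, h2, h1⟩
    have hCM : (C.card : ℝ) ≤ β + d * τ + d * R := by
      by_cases hsub : C ⊆ V1set (SimpleGraph.fromEdgeSet (u : Set (Sym2 V))) R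
      · have h3 := card_V1set_inter_le (s := s) hd hu hk hR (closedUnder_compVerts c)
        rw [← hC, Finset.inter_eq_right.2 hsub] at h3
        have h4 := card_branchDarts_le (k := k) hd hsu C
        have h5 : (C.card : ℝ) ≤ (branchDarts G s u k C).card := by exact_mod_cast h3
        have h6 : (d : ℝ) * (bigVerts s k ∩ C).card ≤ d * τ := by gcongr
        linarith
      · obtain ⟨x, hx, hx1⟩ := Finset.not_subset.1 hsub
        have h3 : (C.card : ℝ) ≤ d * R := by
          exact_mod_cast card_compVerts_le_of_notMem_V1set hd1 (by omega) hd hHG hx hx1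
        linarith
    have h3 := card_lt_of_not_split hτ (by positivity)
      (fun c' => (Nat.cast_le.2 (hc c')).trans hCM) hsplit
    have h4 : ((bigVerts s k \ C).card : ℝ) ≤ (bigVerts s k).card := by
      exact_mod_cast Finset.card_le_card Finset.sdiff_subset
    linarith
  · linarith

/-- If few darts gain a long branch from `s` to `u`, and `u` merges the big components of `s`, then
`E₁` and `V₁` are close to the largest component. -/
lemma card_symmDiff_le {d k R : ℕ} (hd1 : 1 ≤ d) (hd : ∀ v, (nbrs G v).card = d)
    {s u : Finset (Sym2 V)} (hsu : s ⊆ u) (hu : u ⊆ edgeFinset' G) (hk : k < G.girth)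
    (hR : branchSize d k < R) {c : (SimpleGraph.fromEdgeSet (u : Set (Sym2 V))).ConnectedComponent}
    (hc : IsLargestComp _ c) {β τ : ℝ} (hτ : 0 < τ) (hβ : numLong G k u - numLong G k s ≤ β)
    (hsplit : ¬ ∃ S : Finset V, ClosedUnder u S ∧ τ ≤ (bigVerts s k ∩ S).card ∧
      τ ≤ (bigVerts s k \ S).card) :
    ((E1set (SimpleGraph.fromEdgeSet (u : Set (Sym2 V))) R ∆
      compEdges (SimpleGraph.fromEdgeSet (u : Set (Sym2 V))) c).card : ℝ) ≤
        β + d * (β + d * τ + d * R + 2 * τ) + 2 * (d * R) ∧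
    ((V1set (SimpleGraph.fromEdgeSet (u : Set (Sym2 V))) R ∆
      compVerts (SimpleGraph.fromEdgeSet (u : Set (Sym2 V))) c).card : ℝ) ≤
        β + d * (β + d * τ + d * R + 2 * τ) + 2 * (d * R) := by
  have hHG : SimpleGraph.fromEdgeSet (u : Set (Sym2 V)) ≤ G :=
    fun a b hab => (adj_of_adj_fromEdgeSet hu hab).1
  have hW := card_bigVerts_sdiff_le hd1 hd hsu hu hk hR hc hτ hβ hsplit
  have hdR : (0 : ℝ) ≤ d * R := by positivity
  have hD : ((branchDarts G s u k
      (compVerts (SimpleGraph.fromEdgeSet (u : Set (Sym2 V))) c)ᶜ).card : ℝ) ≤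
      β + d * (β + d * τ + d * R + 2 * τ) := by
    refine (card_branchDarts_le hd hsu _).trans ?_
    rw [← Finset.sdiff_eq_inter_compl]
    gcongr
  constructor
  · have h1 := card_E1set_sdiff_le (s := s) hd hu hk hR c
    have h2 : (compEdges (SimpleGraph.fromEdgeSet (u : Set (Sym2 V))) c \
        E1set (SimpleGraph.fromEdgeSet (u : Set (Sym2 V))) R).card ≤ 2 * (d * R) := by
      rcases Finset.eq_empty_or_nonempty (compEdges (SimpleGraph.fromEdgeSet (u : Set (Sym2 V))) c \
        E1set (SimpleGraph.fromEdgeSet (u : Set (Sym2 V))) R) with h | ⟨e, he⟩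
      · simp [h]
      · obtain ⟨he, he1⟩ := Finset.mem_sdiff.1 he
        calc _ ≤ _ := Finset.card_le_card Finset.sdiff_subset
          _ ≤ _ := card_compEdges_le hd hHG c
          _ ≤ 2 * R * d := Nat.mul_le_mul_right _ (card_compVerts_le_of_notMem_E1set he he1)
          _ = _ := by ring
    have h3 := (Finset.card_union_le _ _).trans (Nat.add_le_add h1 h2)
    have h4 : ((E1set (SimpleGraph.fromEdgeSet (u : Set (Sym2 V))) R ∆
      compEdges (SimpleGraph.fromEdgeSet (u : Set (Sym2 V))) c).card : ℝ) ≤ _ := Nat.cast_le.2 h3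
    push_cast at h4
    linarith
  · have h1 := card_V1set_inter_le (s := s) hd hu hk hR (closedUnder_compVerts c).compl
    rw [← Finset.sdiff_eq_inter_compl] at h1
    have h2 : (compVerts (SimpleGraph.fromEdgeSet (u : Set (Sym2 V))) c \
        V1set (SimpleGraph.fromEdgeSet (u : Set (Sym2 V))) R).card ≤ d * R := by
      rcases Finset.eq_empty_or_nonempty (compVerts (SimpleGraph.fromEdgeSet (u : Set (Sym2 V))) c \
        V1set (SimpleGraph.fromEdgeSet (u : Set (Sym2 V))) R) with h | ⟨x, hx⟩
      · simp [h]
      · obtain ⟨hx, hx1⟩ := Finset.mem_sdiff.1 hx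
        exact (Finset.card_le_card Finset.sdiff_subset).trans
          (card_compVerts_le_of_notMem_V1set hd1 (by omega) hd hHG hx hx1)
    have h3 := (Finset.card_union_le _ _).trans (Nat.add_le_add h1 h2)
    have h4 : ((V1set (SimpleGraph.fromEdgeSet (u : Set (Sym2 V))) R ∆
      compVerts (SimpleGraph.fromEdgeSet (u : Set (Sym2 V))) c).card : ℝ) ≤ _ := Nat.cast_le.2 h3
    push_cast at h4
    linarith

end LargestComponent

open Filter in
lemma exists_large_radius (d k : ℕ) {c δ : ℝ} (hδ : 0 < δ) :
    ∃ R : ℕ, branchSize d k < R ∧ k ≤ R ∧ d * c ≤ 2 ^ R ∧ (d * d * R : ℝ) ≤ δ * 2 ^ R := by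
  have h1 := (tendsto_pow_atTop_atTop_of_one_lt (one_lt_two (α := ℝ))).eventually_ge_atTop (d * c)
  have h2 : ∀ᶠ R : ℕ in atTop, (R : ℝ) ^ 1 / 2 ^ R < δ / (d * d + 1) :=
    (tendsto_pow_const_div_const_pow_of_one_lt 1 (one_lt_two (α := ℝ))).eventually
      (gt_mem_nhds (by positivity))
  obtain ⟨R, h1, h2, h3, h4⟩ := (h1.and (h2.and
    ((eventually_gt_atTop (branchSize d k)).and (eventually_ge_atTop k)))).exists
  refine ⟨R, h3, h4, h1, ?_⟩
  rw [pow_one, div_lt_div_iff₀ (by positivity) (by positivity)] at h2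
  nlinarith [Nat.cast_nonneg (α := ℝ) R]

/-- A union bound over two independent rounds of percolation. -/
lemma percExp_le_of_sprinkling {α : Type} [DecidableEq α] {p p₁ p₂ : ℝ} (hp₁ : 0 ≤ p₁)
    (hp₁1 : p₁ ≤ 1)
    (hp₂ : 0 ≤ p₂) (hp₂1 : p₂ ≤ 1) (h : 1 - p = (1 - p₁) * (1 - p₂)) {E : Finset α}
    {F A B : Finset α → ℝ} {C : Finset α → Finset α → ℝ} {a κ : ℝ}
    (hF : ∀ s ⊆ E, ∀ t ⊆ E, F (s ∪ t) ≤ A (s ∪ t) + B s + C s t)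
    (hA : percExp p E A ≤ a) (hB : percExp p₁ E B ≤ a) (hC : ∀ s, percExp p₂ E (C s) ≤ κ) :
    percExp p E F ≤ 2 * a + κ := by
  have h1 : percExp p E F ≤ percExp p₁ E fun s =>
      percExp p₂ E (fun t => A (s ∪ t)) + (B s + κ) := by
    rw [percExp_union h]
    refine percExp_mono hp₁ hp₁1 fun s hs => ?_
    refine (percExp_mono hp₂ hp₂1 (hF s hs)).trans ?_
    rw [percExp_add, percExp_add, percExp_const]
    linarith [hC s]
  rw [percExp_add, percExp_add, percExp_const, ← percExp_union h] at h1
  linarith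

lemma ite_le_add_ite {P A B C : Prop} [Decidable P] [Decidable A] [Decidable B] [Decidable C]
    (h : P → A ∨ B ∨ C) : (if P then (1 : ℝ) else 0) ≤
      (if A then 1 else 0) + (if B then 1 else 0) + if C then 1 else 0 := by
  by_cases hP : P
  · rcases h hP with h | h | h <;> simp only [hP, h, if_true] <;> split_ifs <;> norm_num
  · simp only [hP, if_false]
    split_ifs <;> norm_num

lemma exp_add_le_exp {c c₁ c₂ n : ℝ} (hc : 0 < c) (hn : 0 ≤ n) (h₁ : 2 * c ≤ c₁) (h₂ : 2 * c ≤ c₂)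
    (h : 4 / c ≤ n) : 2 * Real.exp (-c₁ * n) + Real.exp (1 - c₂ * n) ≤ Real.exp (-c * n) := by
  have hcn : 4 ≤ c * n := by rwa [div_le_iff₀' hc] at h
  have h3 : Real.exp (-c₁ * n) ≤ Real.exp (-c * n) * Real.exp (-4) := by
    rw [← Real.exp_add]
    exact Real.exp_le_exp.2 (by nlinarith)
  have h4 : Real.exp (1 - c₂ * n) ≤ Real.exp (-c * n) * (Real.exp (-4) * Real.exp 1) := by
    rw [← Real.exp_add, ← Real.exp_add]
    exact Real.exp_le_exp.2 (by nlinarith)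
  have h5 : Real.exp (-4) * 5 ≤ 1 := by
    calc Real.exp (-4) * 5 ≤ Real.exp (-4) * Real.exp 4 := by
          gcongr; linarith [Real.add_one_le_exp (4 : ℝ)]
      _ = 1 := by rw [← Real.exp_add]; simp
  have h6 := Real.exp_one_lt_d9
  have h7 := Real.exp_pos (-c * n)
  have h8 := Real.exp_pos (-4)
  have h9 : Real.exp (-4) * Real.exp 1 ≤ Real.exp (-4) * 3 := by gcongr; linarith
  nlinarith

theorem E1_V1_approximate_giant (d : ℕ) (hd : 3 ≤ d) (p : ℝ)
    (hp : 1 / ((d : ℝ) - 1) < p) (hp1 : p < 1)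
    (ε b : ℝ) (hε : 0 < ε) (hb : 0 < b) :
    ∃ R : ℕ, 0 < R ∧ ∃ c > (0:ℝ),
      ∀ (V : Type) [Fintype V] [DecidableEq V] (G : SimpleGraph V),
        IsRegularExpander G b d → ((2 * R : ℕ) : ℕ∞) < G.girth →
        percProb G p (fun H =>
            ∃ c₁ : H.ConnectedComponent, IsLargestComp H c₁ ∧
              ε * Fintype.card V < ((E1set H R ∆ compEdges H c₁).card : ℝ))
          ≤ Real.exp (-c * Fintype.card V) ∧
        percProb G p (fun H =>
            ∃ c₁ : H.ConnectedComponent, IsLargestComp H c₁ ∧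
              ε * Fintype.card V < ((V1set H R ∆ compVerts H c₁).card : ℝ))
          ≤ Real.exp (-c * Fintype.card V) := by
  have hd' : (3 : ℝ) ≤ d := by exact_mod_cast hd
  have hp0 : 0 < p := (div_pos one_pos (by linarith : (0 : ℝ) < d - 1)).trans hp
  obtain ⟨δ, hδ⟩ : ∃ δ : ℝ, δ = ε / (d * d + 6 * d + 5) := ⟨_, rfl⟩
  have hδ0 : 0 < δ := hδ ▸ by positivity
  have hδε : δ * (d * d + 6 * d + 5) = ε := by rw [hδ]; field_simp
  obtain ⟨p₁, hp₁, hp₁p, k₀, hk₀⟩ := exists_survival_sub_le (m := d - 1) (by omega) hp0 hp1.le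
    (show 0 < δ / d by positivity)
  obtain ⟨p₂, hp₂⟩ : ∃ p₂, p₂ = (p - p₁) / (1 - p₁) := ⟨_, rfl⟩
  have h1p₁ : 0 < 1 - p₁ := by linarith
  have hp₂0 : 0 < p₂ := hp₂ ▸ div_pos (by linarith) h1p₁
  have hp₂1 : p₂ ≤ 1 := by rw [hp₂, div_le_one h1p₁]; linarith
  have hpp : 1 - p = (1 - p₁) * (1 - p₂) := by rw [hp₂]; field_simp; ring
  obtain ⟨r₀, hr₀⟩ : ∃ r₀ : ℕ, (d : ℝ) / (b * δ) < r₀ := exists_nat_gt _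
  have hr₀0 : (0 : ℝ) < r₀ := lt_of_le_of_lt (by positivity) hr₀
  rw [div_lt_iff₀ (by positivity)] at hr₀
  obtain ⟨c₂, hc₂⟩ : ∃ c₂, c₂ = p₂ ^ (2 * r₀) * (b * δ / (4 * r₀)) := ⟨_, rfl⟩
  have hc₂0 : 0 < c₂ := hc₂ ▸ by positivity
  obtain ⟨k, hkk₀, hk⟩ : ∃ k : ℕ, k₀ ≤ k ∧ 2 / c₂ ≤ k := by
    obtain ⟨k, hk⟩ := exists_nat_ge (2 / c₂)
    exact ⟨max k₀ k, le_max_left _ _, hk.trans (by exact_mod_cast le_max_right _ _)⟩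
  rw [div_le_iff₀' hc₂0, hc₂] at hk
  obtain ⟨c₁, hc₁0, htail⟩ := exists_numLong_tail (by omega : 0 < d) k hδ0
  obtain ⟨c, hc⟩ : ∃ c, c = min c₁ (c₂ / 2) / 2 := ⟨_, rfl⟩
  have hc0 : 0 < c := hc ▸ by positivity
  have hcc₁ : 2 * c ≤ c₁ := by linarith [min_le_left c₁ (c₂ / 2)]
  have hcc₂ : 2 * c ≤ c₂ / 2 := by linarith [min_le_right c₁ (c₂ / 2)]
  obtain ⟨R, hR, hkR, hR₁, hR₂⟩ := exists_large_radius d k (c := 4 / c) hδ0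
  refine ⟨R, by omega, c, hc0, fun V _ _ G hG hg => ?_⟩
  have hg : 2 * R < G.girth := by exact_mod_cast hg
  have hdeg : ∀ v, (nbrs G v).card = d := fun v => (card_nbrs v).trans (hG.2 v)
  have hcard : (2 : ℝ) ^ R ≤ d * Fintype.card V := by
    exact_mod_cast pow_le_mul_card hd hdeg (by omega) hg
  have hn : 0 < Fintype.card V := by
    rw [Nat.pos_iff_ne_zero]
    intro h0
    rw [h0] at hcard
    have : (0 : ℝ) < 2 ^ R := by positivity
    simp at hcard
    linarith
  have hnc : 4 / c ≤ (Fintype.card V : ℝ) :=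
    le_of_mul_le_mul_left (hR₁.trans hcard) (by linarith)
  have hRn : (d * R : ℝ) ≤ δ * Fintype.card V := by
    refine le_of_mul_le_mul_left (a := (d : ℝ)) ?_ (by linarith)
    calc (d * (d * R) : ℝ) = d * d * R := by ring
      _ ≤ δ * 2 ^ R := hR₂
      _ ≤ δ * (d * Fintype.card V) := by gcongr
      _ = _ := by ring
  have hn' : (0 : ℝ) < Fintype.card V := by exact_mod_cast hn
  have key : ∀ P : SimpleGraph V → Prop,
      (∀ s ⊆ edgeFinset' G, ∀ t ⊆ edgeFinset' G, P (SimpleGraph.fromEdgeSet (s ∪ t : Finset _)) →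
        d * Fintype.card V * survival p (d - 1) k + δ * Fintype.card V ≤ numLong G k (s ∪ t) ∨
        numLong G k s ≤ d * Fintype.card V * survival p₁ (d - 1) k - δ * Fintype.card V ∨
        ∃ S : Finset V, ClosedUnder (s ∪ t) S ∧ δ * Fintype.card V ≤ (bigVerts s k ∩ S).card ∧
          δ * Fintype.card V ≤ (bigVerts s k \ S).card) →
      percProb G p P ≤ Real.exp (-c * Fintype.card V) := by
    intro P hP
    refine le_trans ?_ (exp_add_le_exp hc0 hn'.le hcc₁ hcc₂ hnc)
    refine percExp_le_of_sprinkling hp₁ (by linarith) hp₂0.le hp₂1 hpp (fun s hs t ht => ?_)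
      (htail p hp0.le hp1.le V G hdeg (by omega)).1
      (htail p₁ hp₁ (by linarith) V G hdeg (by omega)).2
      (fun s => (percExp_split_le hb hδ0 hp₂0.le hp₂1 hG.1 hdeg hr₀ hn hk s).trans (by rw [hc₂]))
    exact ite_le_add_ite (hP s hs t ht)
  have main : ∀ s ⊆ edgeFinset' G, ∀ t ⊆ edgeFinset' G,
      ∀ c₀ : (SimpleGraph.fromEdgeSet ((s ∪ t : Finset _) : Set (Sym2 V))).ConnectedComponent,
      IsLargestComp _ c₀ →
      (d * Fintype.card V * survival p (d - 1) k + δ * Fintype.card V ≤ numLong G k (s ∪ t) ∨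
        numLong G k s ≤ d * Fintype.card V * survival p₁ (d - 1) k - δ * Fintype.card V ∨
        ∃ S : Finset V, ClosedUnder (s ∪ t) S ∧ δ * Fintype.card V ≤ (bigVerts s k ∩ S).card ∧
          δ * Fintype.card V ≤ (bigVerts s k \ S).card) ∨
      (((E1set (SimpleGraph.fromEdgeSet ((s ∪ t : Finset _) : Set (Sym2 V))) R ∆
        compEdges (SimpleGraph.fromEdgeSet ((s ∪ t : Finset _) : Set (Sym2 V))) c₀).card : ℝ) ≤
          ε * Fintype.card V ∧
        ((V1set (SimpleGraph.fromEdgeSet ((s ∪ t : Finset _) : Set (Sym2 V))) R ∆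
        compVerts (SimpleGraph.fromEdgeSet ((s ∪ t : Finset _) : Set (Sym2 V))) c₀).card : ℝ) ≤
          ε * Fintype.card V) := by
    intro s hs t ht c₀ hc₀
    rw [or_iff_not_imp_left]
    intro hno
    rw [not_or, not_or, not_le, not_le] at hno
    obtain ⟨hu, hl, hsplit⟩ := hno
    have hsurv : d * Fintype.card V * (survival p (d - 1) k - survival p₁ (d - 1) k) ≤
        δ * Fintype.card V := by
      calc _ ≤ d * Fintype.card V * (δ / d) := by gcongr; exact hk₀ k hkk₀
        _ = _ := by field_simp
    have hβ : numLong G k (s ∪ t) - numLong G k s ≤ 3 * (δ * Fintype.card V) := by linarith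
    have hbound : 3 * (δ * Fintype.card V) + d * (3 * (δ * Fintype.card V) +
        d * (δ * Fintype.card V) + d * R + 2 * (δ * Fintype.card V)) + 2 * (d * R) ≤
        ε * Fintype.card V := by
      calc _ ≤ 3 * (δ * Fintype.card V) + d * (3 * (δ * Fintype.card V) +
            d * (δ * Fintype.card V) + δ * Fintype.card V + 2 * (δ * Fintype.card V)) +
            2 * (δ * Fintype.card V) := by gcongr
        _ = δ * (d * d + 6 * d + 5) * Fintype.card V := by ring
        _ = _ := by rw [hδε]
    obtain ⟨hE, hV⟩ := card_symmDiff_le (by omega) hdeg Finset.subset_union_left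
      (Finset.union_subset hs ht) (by omega) hR hc₀ (by positivity) hβ hsplit
    exact ⟨hE.trans hbound, hV.trans hbound⟩
  constructor
  · refine key _ fun s hs t ht ⟨c₀, hc₀, hlt⟩ => ?_
    exact (main s hs t ht c₀ hc₀).resolve_right fun h => absurd h.1 (not_le.2 hlt)
  · refine key _ fun s hs t ht ⟨c₀, hc₀, hlt⟩ => ?_
    exact (main s hs t ht c₀ hc₀).resolve_right fun h => absurd h.2 (not_le.2 hlt)

end Percolation

end
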